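/- arXiv:2012.11023 — 3 statements merged into one kernel-verified Lean document; each statement's English description precedes it below -/
import Mathlib

section
/- Let p, θ > 0 and let (u,v) be a smooth positive solution of the Grushin Lane–Emden system on ℝ^N. Then for every integer k ≥ 1 and every ζ ∈ C_c^∞(ℝ^N) with 0 ≤ ζ ≤ 1: ∫_{ℝ^N} v^{p+1} ζ^{4k} dxdy − ∫_{ℝ^N} u^{θ+1} ζ^{4k} dxdy ≤ ∫_{ℝ^N} u v |Δ_s(ζ^{4k})| dxdy + 2 ∫_{ℝ^N} v |∇_s u| |∇_s(ζ^{4k})| dxdy. -/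
open MeasureTheory Real

noncomputable section

/-- Euclidean norm on `Fin n → ℝ`. -/
def enorm' {n : ℕ} (x : Fin n → ℝ) : ℝ := Real.sqrt (∑ i, (x i) ^ 2)

/-- Points of `ℝ^N = ℝ^{N₁} × ℝ^{N₂}`. -/
abbrev Pt (N₁ N₂ : ℕ) := (Fin N₁ → ℝ) × (Fin N₂ → ℝ)

variable {N₁ N₂ : ℕ}

/-- Partial derivative in the variable `x i`. -/
def pX (i : Fin N₁) (w : Pt N₁ N₂ → ℝ) (z : Pt N₁ N₂) : ℝ :=
  deriv (fun t => w (Function.update z.1 i t, z.2)) (z.1 i)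

/-- Partial derivative in the variable `y j`. -/
def pY (j : Fin N₂) (w : Pt N₁ N₂ → ℝ) (z : Pt N₁ N₂) : ℝ :=
  deriv (fun t => w (z.1, Function.update z.2 j t)) (z.2 j)

/-- Laplacian in the `x`-variables. -/
def lapX (w : Pt N₁ N₂ → ℝ) (z : Pt N₁ N₂) : ℝ := ∑ i, pX i (pX i w) z

/-- Laplacian in the `y`-variables. -/
def lapY (w : Pt N₁ N₂ → ℝ) (z : Pt N₁ N₂) : ℝ := ∑ j, pY j (pY j w) z

/-- The Grushin operator `Δ_s w = Δ_x w + |x|^{2s} Δ_y w`. -/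
def grushinLap (s : ℝ) (w : Pt N₁ N₂ → ℝ) (z : Pt N₁ N₂) : ℝ :=
  lapX w z + (enorm' z.1) ^ (2 * s) * lapY w z

/-- Norm of the Grushin gradient: `|∇_s w| = (|∇_x w|² + |x|^{2s}|∇_y w|²)^{1/2}`. -/
def grushinGrad (s : ℝ) (w : Pt N₁ N₂ → ℝ) (z : Pt N₁ N₂) : ℝ :=
  Real.sqrt ((∑ i, (pX i w z) ^ 2) + (enorm' z.1) ^ (2 * s) * ∑ j, (pY j w z) ^ 2)

/-- Hilbert–Schmidt norm of the Grushin Hessian `∇_s² w`. -/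
def grushinHess (s : ℝ) (w : Pt N₁ N₂ → ℝ) (z : Pt N₁ N₂) : ℝ :=
  Real.sqrt ((∑ i, ∑ j, (pX i (pX j w) z) ^ 2)
    + 2 * (enorm' z.1) ^ (2 * s) * (∑ i, ∑ k, (pX i (pY k w) z) ^ 2)
    + (enorm' z.1) ^ (4 * s) * ∑ h, ∑ k, (pY h (pY k w) z) ^ 2)

/-- Norm of the gradient in the `x`-variables only. -/
def gradXNorm (w : Pt N₁ N₂ → ℝ) (z : Pt N₁ N₂) : ℝ := Real.sqrt (∑ i, (pX i w z) ^ 2)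

/-- Norm of the gradient in the `y`-variables only. -/
def gradYNorm (w : Pt N₁ N₂ → ℝ) (z : Pt N₁ N₂) : ℝ := Real.sqrt (∑ j, (pY j w z) ^ 2)

/-- HS norm of the Hessian in the `x`-variables only. -/
def hessXNorm (w : Pt N₁ N₂ → ℝ) (z : Pt N₁ N₂) : ℝ :=
  Real.sqrt (∑ i, ∑ j, (pX i (pX j w) z) ^ 2)

/-- HS norm of the Hessian in the `y`-variables only. -/
def hessYNorm (w : Pt N₁ N₂ → ℝ) (z : Pt N₁ N₂) : ℝ :=
  Real.sqrt (∑ h, ∑ k, (pY h (pY k w) z) ^ 2)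

/-- `(u,v)` is a smooth positive solution of the Grushin Lane–Emden system
`-Δ_s u = v^p`, `-Δ_s v = u^θ`, `u, v > 0` on `ℝ^N`. -/
def IsLaneEmdenSol (s p θ : ℝ) (u v : Pt N₁ N₂ → ℝ) : Prop :=
  ContDiff ℝ (⊤ : ℕ∞) u ∧ ContDiff ℝ (⊤ : ℕ∞) v ∧ (∀ z, 0 < u z) ∧ (∀ z, 0 < v z) ∧
  (∀ z, -grushinLap s u z = (v z) ^ p) ∧ (∀ z, -grushinLap s v z = (u z) ^ θ)

/-- Stability of a solution `(u,v)`: there are `η ≥ 0` and smooth positive `ξ, ζ` with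
`-Δ_s ξ = p v^{p-1} ζ + η ξ` and `-Δ_s ζ = θ u^{θ-1} ξ + η ζ`. -/
def IsStable (s p θ : ℝ) (u v : Pt N₁ N₂ → ℝ) : Prop :=
  ∃ (η : ℝ) (ξ ζ : Pt N₁ N₂ → ℝ), 0 ≤ η ∧
    ContDiff ℝ (⊤ : ℕ∞) ξ ∧ ContDiff ℝ (⊤ : ℕ∞) ζ ∧ (∀ z, 0 < ξ z) ∧ (∀ z, 0 < ζ z) ∧
    (∀ z, -grushinLap s ξ z = p * (v z) ^ (p - 1) * ζ z + η * ξ z) ∧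
    (∀ z, -grushinLap s ζ z = θ * (u z) ^ (θ - 1) * ξ z + η * ζ z)

/-!
Write `Γ(f, g)` for the inner product of the Grushin gradients. The weight `|x|^{2s}` is constant
along the `y`-directions, so `∫ f Δ_s g = -∫ Γ(f, g)` as soon as `f` or `g` has compact support.
For a test function `φ`, expanding the products `v φ`, `u φ` and `u v` inside `Γ` turns this into
the identity `∫ v φ (-Δ_s u) - ∫ u φ (-Δ_s v) = ∫ u v Δ_s φ + 2 ∫ v Γ(u, φ)`; the Lane–Emden
equations rewrite its left side, and Cauchy–Schwarz for `Γ` bounds its right side.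
-/

section LineDeriv

variable {𝕜 E F : Type*} [NontriviallyNormedField 𝕜] [NormedAddCommGroup E] [NormedSpace 𝕜 E]
  [NormedAddCommGroup F] [NormedSpace 𝕜 F]

lemma tsupport_lineDeriv_subset (w : E → F) (e : E) :
    tsupport (lineDeriv 𝕜 w · e) ⊆ tsupport w := by
  refine closure_minimal (fun z hz => ?_) (isClosed_tsupport w)
  contrapose! hz
  have hw : w =ᶠ[nhds z] fun _ => 0 := notMem_tsupport_iff_eventuallyEq.mp hz
  rw [Function.notMem_support, hw.lineDeriv_eq, lineDeriv, deriv_const]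

lemma hasCompactSupport_lineDeriv {w : E → F} (hw : HasCompactSupport w) (e : E) :
    HasCompactSupport (lineDeriv 𝕜 w · e) :=
  hw.of_isClosed_subset (isClosed_tsupport _) (tsupport_lineDeriv_subset w e)

lemma contDiff_lineDeriv {w : E → F} {m n : WithTop ℕ∞} (hw : ContDiff 𝕜 n w) (hmn : m + 1 ≤ n)
    (e : E) : ContDiff 𝕜 m (lineDeriv 𝕜 w · e) := by
  have hw_diff : Differentiable 𝕜 w :=
    (hw.of_le (le_add_self.trans hmn)).differentiable one_ne_zero
  simp only [(hw_diff _).lineDeriv_eq_fderiv]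
  exact (hw.fderiv_right hmn).clm_apply contDiff_const

lemma continuous_lineDeriv {w : E → F} (hw : ContDiff 𝕜 1 w) (e : E) :
    Continuous (lineDeriv 𝕜 w · e) :=
  (contDiff_lineDeriv hw (zero_add 1).le e).continuous

lemma lineDeriv_fun_mul {f g : E → 𝕜} {z e : E} (hf : DifferentiableAt 𝕜 f z)
    (hg : DifferentiableAt 𝕜 g z) :
    lineDeriv 𝕜 (fun z => f z * g z) z e = f z * lineDeriv 𝕜 g z e + g z * lineDeriv 𝕜 f z e := by
  rw [(hf.fun_mul hg).lineDeriv_eq_fderiv, hf.lineDeriv_eq_fderiv, hg.lineDeriv_eq_fderiv,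
    fderiv_fun_mul hf hg]
  rfl

lemma hasLineDerivAt_mul_of_invariant {c f : E → 𝕜} {z e : E}
    (hce : ∀ t : 𝕜, c (z + t • e) = c z) (hf : LineDifferentiableAt 𝕜 f z e) :
    HasLineDerivAt 𝕜 (fun z => c z * f z) (c z * lineDeriv 𝕜 f z e) z e := by
  simp only [HasLineDerivAt, hce]
  exact HasDerivAt.const_mul (c z) hf.hasLineDerivAt

end LineDeriv

section IntegrationByParts

lemma integrable_mul_mul {X : Type*} [TopologicalSpace X] [MeasurableSpace X]
    [OpensMeasurableSpace X] {μ : Measure X} [IsFiniteMeasureOnCompacts μ] {c f g : X → ℝ}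
    (hc : Continuous c) (hf : Continuous f) (hg : Continuous g)
    (hfg : HasCompactSupport f ∨ HasCompactSupport g) :
    Integrable (fun z => c z * f z * g z) μ :=
  ((hc.mul hf).mul hg).integrable_of_hasCompactSupport <|
    hfg.elim (fun h => h.mul_left.mul_right) fun h => h.mul_left

variable {E : Type*} [NormedAddCommGroup E] [NormedSpace ℝ E] [FiniteDimensional ℝ E]
  [MeasurableSpace E] [BorelSpace E] {μ : Measure E} [μ.IsAddHaarMeasure]

lemma integral_mul_lineDeriv_eq_neg {c f g : E → ℝ} {e : E} (hc : Continuous c)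
    (hce : ∀ z (t : ℝ), c (z + t • e) = c z) (hf : ContDiff ℝ 1 f) (hg : ContDiff ℝ 1 g)
    (hfg : HasCompactSupport f ∨ HasCompactSupport g) :
    ∫ z, c z * f z * lineDeriv ℝ g z e ∂μ = -∫ z, c z * lineDeriv ℝ f z e * g z ∂μ := by
  have hf' := continuous_lineDeriv hf e
  have hg' := continuous_lineDeriv hg e
  have hfd := hf.differentiable one_ne_zero
  have hgd := hg.differentiable one_ne_zero
  exact integral_bilinear_hasLineDerivAt_right_eq_neg_left_of_integrable
    (B := ContinuousLinearMap.mul ℝ ℝ)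
    (integrable_mul_mul hc hf' hg.continuous (hfg.imp_left (hasCompactSupport_lineDeriv · e)))
    (integrable_mul_mul hc hf.continuous hg' (hfg.imp_right (hasCompactSupport_lineDeriv · e)))
    (integrable_mul_mul hc hf.continuous hg.continuous hfg)
    (fun z _ => hasLineDerivAt_mul_of_invariant (hce z) (hfd z).lineDifferentiableAt)
    (fun z _ => (hgd z).lineDifferentiableAt.hasLineDerivAt)

end IntegrationByParts

section WeightedLaplacian

variable {E ι : Type*} [NormedAddCommGroup E] [NormedSpace ℝ E] [Fintype ι]
  {c : ι → E → ℝ} {e : ι → E}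

/-- The second-order operator `L w = ∑ i, c i * ∂_{e i}² w` with weights `c i` and directions
`e i`; it is symmetric when each `c i` is constant along `e i`. -/
def weightedLaplacian (c : ι → E → ℝ) (e : ι → E) (w : E → ℝ) (z : E) : ℝ :=
  ∑ i, c i z * lineDeriv ℝ (lineDeriv ℝ w · (e i)) z (e i)

/-- The carré du champ `Γ(f, g) = ∑ i, c i * ∂_{e i} f * ∂_{e i} g` of `weightedLaplacian c e`,
so that `√Γ(f, f)` is the norm of the weighted gradient of `f`. -/
def carreDuChamp (c : ι → E → ℝ) (e : ι → E) (f g : E → ℝ) (z : E) : ℝ :=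
  ∑ i, c i z * (lineDeriv ℝ f z (e i) * lineDeriv ℝ g z (e i))

lemma carreDuChamp_comm (f g : E → ℝ) : carreDuChamp c e f g = carreDuChamp c e g f := by
  funext z
  simp only [carreDuChamp, mul_comm (lineDeriv ℝ f z _)]

lemma carreDuChamp_mul_left {f g h : E → ℝ} {z : E} (hf : DifferentiableAt ℝ f z)
    (hg : DifferentiableAt ℝ g z) :
    carreDuChamp c e (fun z => f z * g z) h z =
      f z * carreDuChamp c e g h z + g z * carreDuChamp c e f h z := by
  simp only [carreDuChamp, lineDeriv_fun_mul hf hg, Finset.mul_sum, ← Finset.sum_add_distrib]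
  exact Finset.sum_congr rfl fun i _ => by ring

lemma carreDuChamp_le_sqrt_mul_sqrt {z : E} (hc : ∀ i, 0 ≤ c i z) (f g : E → ℝ) :
    carreDuChamp c e f g z ≤ √(carreDuChamp c e f f z) * √(carreDuChamp c e g g z) := by
  have h_nonneg : ∀ (w : E → ℝ) (i : ι),
      0 ≤ c i z * (lineDeriv ℝ w z (e i) * lineDeriv ℝ w z (e i)) :=
    fun w i => mul_nonneg (hc i) (mul_self_nonneg _)
  have h_sq : carreDuChamp c e f g z ^ 2 ≤ carreDuChamp c e f f z * carreDuChamp c e g g z :=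
    Finset.sum_sq_le_sum_mul_sum_of_sq_le_mul _ (fun i _ => h_nonneg f i)
      (fun i _ => h_nonneg g i) fun i _ => le_of_eq (by ring)
  have h_ff : 0 ≤ carreDuChamp c e f f z := Finset.sum_nonneg fun i _ => h_nonneg f i
  rw [← Real.sqrt_mul h_ff]
  exact Real.le_sqrt_of_sq_le h_sq

lemma continuous_weightedLaplacian {w : E → ℝ} (hc : ∀ i, Continuous (c i))
    (hw : ContDiff ℝ 2 w) : Continuous (weightedLaplacian c e w) :=
  continuous_finsetSum _ fun i _ => (hc i).mul <|
    continuous_lineDeriv (contDiff_lineDeriv hw one_add_one_eq_two.le _) _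

lemma continuous_carreDuChamp {f g : E → ℝ} (hc : ∀ i, Continuous (c i))
    (hf : ContDiff ℝ 1 f) (hg : ContDiff ℝ 1 g) : Continuous (carreDuChamp c e f g) :=
  continuous_finsetSum _ fun i _ => (hc i).mul <|
    (continuous_lineDeriv hf _).mul (continuous_lineDeriv hg _)

lemma hasCompactSupport_weightedLaplacian {w : E → ℝ} (hw : HasCompactSupport w) :
    HasCompactSupport (weightedLaplacian c e w) := by
  refine HasCompactSupport.intro hw fun z hz => Finset.sum_eq_zero fun i _ => ?_
  have hz' : z ∉ tsupport (lineDeriv ℝ (lineDeriv ℝ w · (e i)) · (e i)) := fun h =>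
    hz (tsupport_lineDeriv_subset _ _ (tsupport_lineDeriv_subset _ _ h))
  rw [image_eq_zero_of_notMem_tsupport hz', mul_zero]

lemma hasCompactSupport_carreDuChamp_right {f g : E → ℝ} (hg : HasCompactSupport g) :
    HasCompactSupport (carreDuChamp c e f g) := by
  refine HasCompactSupport.intro hg fun z hz => Finset.sum_eq_zero fun i _ => ?_
  have hz' : z ∉ tsupport (lineDeriv ℝ g · (e i)) := fun h => hz (tsupport_lineDeriv_subset _ _ h)
  rw [image_eq_zero_of_notMem_tsupport hz', mul_zero, mul_zero]

lemma hasCompactSupport_carreDuChamp_left {f g : E → ℝ} (hf : HasCompactSupport f) :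
    HasCompactSupport (carreDuChamp c e f g) :=
  carreDuChamp_comm (c := c) (e := e) g f ▸ hasCompactSupport_carreDuChamp_right hf

variable [MeasurableSpace E] [BorelSpace E] {μ : Measure E}

lemma integrable_mul_carreDuChamp [IsFiniteMeasureOnCompacts μ] {f g h : E → ℝ}
    (hc : ∀ i, Continuous (c i)) (hf : Continuous f) (hg : ContDiff ℝ 1 g) (hh : ContDiff ℝ 1 h)
    (hfgh : HasCompactSupport f ∨ HasCompactSupport g ∨ HasCompactSupport h) :
    Integrable (fun z => f z * carreDuChamp c e g h z) μ := by
  refine (hf.mul (continuous_carreDuChamp hc hg hh)).integrable_of_hasCompactSupport ?_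
  rcases hfgh with hfc | hgc | hhc
  · exact hfc.mul_right
  · exact (hasCompactSupport_carreDuChamp_left hgc).mul_left
  · exact (hasCompactSupport_carreDuChamp_right hhc).mul_left

variable [FiniteDimensional ℝ E] [μ.IsAddHaarMeasure]

lemma integral_mul_weightedLaplacian {f g : E → ℝ} (hc : ∀ i, Continuous (c i))
    (hce : ∀ i z (t : ℝ), c i (z + t • e i) = c i z) (hf : ContDiff ℝ 1 f) (hg : ContDiff ℝ 2 g)
    (hfg : HasCompactSupport f ∨ HasCompactSupport g) :
    ∫ z, f z * weightedLaplacian c e g z ∂μ = -∫ z, carreDuChamp c e f g z ∂μ := by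
  have hg' : ∀ i, ContDiff ℝ 1 (lineDeriv ℝ g · (e i)) := fun i =>
    contDiff_lineDeriv hg one_add_one_eq_two.le _
  have hfg' : ∀ i, HasCompactSupport f ∨ HasCompactSupport (lineDeriv ℝ g · (e i)) := fun i =>
    hfg.imp_right (hasCompactSupport_lineDeriv · _)
  have h_int : ∀ i, Integrable
      (fun z => c i z * f z * lineDeriv ℝ (lineDeriv ℝ g · (e i)) z (e i)) μ := fun i =>
    integrable_mul_mul (hc i) hf.continuous (continuous_lineDeriv (hg' i) _)
      ((hfg' i).imp_right (hasCompactSupport_lineDeriv · _))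
  have h_int' : ∀ i, Integrable
      (fun z => c i z * lineDeriv ℝ f z (e i) * lineDeriv ℝ g z (e i)) μ := fun i =>
    integrable_mul_mul (hc i) (continuous_lineDeriv hf _) (hg' i).continuous
      ((hfg' i).imp_left (hasCompactSupport_lineDeriv · _))
  calc ∫ z, f z * weightedLaplacian c e g z ∂μ
      = ∑ i, ∫ z, c i z * f z * lineDeriv ℝ (lineDeriv ℝ g · (e i)) z (e i) ∂μ := by
        rw [← integral_finsetSum _ fun i _ => h_int i]
        simp only [weightedLaplacian, Finset.mul_sum, mul_left_comm (f _), mul_assoc]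
    _ = ∑ i, -∫ z, c i z * lineDeriv ℝ f z (e i) * lineDeriv ℝ g z (e i) ∂μ :=
        Finset.sum_congr rfl fun i _ =>
          integral_mul_lineDeriv_eq_neg (hc i) (hce i) hf (hg' i) (hfg' i)
    _ = -∫ z, carreDuChamp c e f g z ∂μ := by
        rw [Finset.sum_neg_distrib, ← integral_finsetSum _ fun i _ => h_int' i]
        simp only [carreDuChamp, mul_assoc]

lemma integral_mul_mul_weightedLaplacian {f g h : E → ℝ} (hc : ∀ i, Continuous (c i))
    (hce : ∀ i z (t : ℝ), c i (z + t • e i) = c i z)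
    (hf : ContDiff ℝ 1 f) (hg : ContDiff ℝ 1 g) (hh : ContDiff ℝ 2 h)
    (hgh : HasCompactSupport g ∨ HasCompactSupport h) :
    ∫ z, f z * g z * weightedLaplacian c e h z ∂μ =
      -(∫ z, f z * carreDuChamp c e g h z ∂μ) - ∫ z, g z * carreDuChamp c e f h z ∂μ := by
  have hh₁ : ContDiff ℝ 1 h := hh.of_le one_le_two
  rw [integral_mul_weightedLaplacian hc hce (hf.mul hg) hh (hgh.imp_left fun h => h.mul_left)]
  simp only [carreDuChamp_mul_left (hf.differentiable one_ne_zero _)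
    (hg.differentiable one_ne_zero _)]
  rw [integral_add (integrable_mul_carreDuChamp hc hf.continuous hg hh₁ (.inr hgh))
    (integrable_mul_carreDuChamp hc hg.continuous hf hh₁ (hgh.imp_right .inr)), neg_add']

lemma integral_mul_weightedLaplacian_sub {u v φ : E → ℝ} (hc : ∀ i, Continuous (c i))
    (hce : ∀ i z (t : ℝ), c i (z + t • e i) = c i z)
    (hu : ContDiff ℝ 2 u) (hv : ContDiff ℝ 2 v) (hφ : ContDiff ℝ 2 φ)
    (hφc : HasCompactSupport φ) :
    (∫ z, u z * φ z * weightedLaplacian c e v z ∂μ) -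
        ∫ z, v z * φ z * weightedLaplacian c e u z ∂μ =
      (∫ z, u z * v z * weightedLaplacian c e φ z ∂μ) +
        2 * ∫ z, v z * carreDuChamp c e u φ z ∂μ := by
  have hu₁ : ContDiff ℝ 1 u := hu.of_le one_le_two
  have hv₁ : ContDiff ℝ 1 v := hv.of_le one_le_two
  have hφ₁ : ContDiff ℝ 1 φ := hφ.of_le one_le_two
  rw [integral_mul_mul_weightedLaplacian hc hce hu₁ hφ₁ hv (.inl hφc),
    integral_mul_mul_weightedLaplacian hc hce hv₁ hφ₁ hu (.inl hφc),
    integral_mul_mul_weightedLaplacian hc hce hu₁ hv₁ hφ (.inr hφc),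
    carreDuChamp_comm φ v, carreDuChamp_comm φ u, carreDuChamp_comm v u]
  ring

lemma integral_mul_weightedLaplacian_sub_le {u v φ : E → ℝ} (hc : ∀ i, Continuous (c i))
    (hc0 : ∀ i z, 0 ≤ c i z) (hce : ∀ i z (t : ℝ), c i (z + t • e i) = c i z)
    (hu : ContDiff ℝ 2 u) (hv : ContDiff ℝ 2 v) (hu0 : ∀ z, 0 ≤ u z) (hv0 : ∀ z, 0 ≤ v z)
    (hφ : ContDiff ℝ 2 φ) (hφc : HasCompactSupport φ) :
    (∫ z, u z * φ z * weightedLaplacian c e v z ∂μ) -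
        ∫ z, v z * φ z * weightedLaplacian c e u z ∂μ ≤
      (∫ z, u z * v z * |weightedLaplacian c e φ z| ∂μ) +
        2 * ∫ z, v z * √(carreDuChamp c e u u z) * √(carreDuChamp c e φ φ z) ∂μ := by
  have hu₁ : ContDiff ℝ 1 u := hu.of_le one_le_two
  have hφ₁ : ContDiff ℝ 1 φ := hφ.of_le one_le_two
  have h_lap := continuous_weightedLaplacian (e := e) hc hφ
  have h_lap_supp := hasCompactSupport_weightedLaplacian (c := c) (e := e) hφc
  have h_uv := hu.continuous.mul hv.continuous
  have h_grad_supp : HasCompactSupport fun z => √(carreDuChamp c e φ φ z) :=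
    (hasCompactSupport_carreDuChamp_right hφc).comp_left Real.sqrt_zero
  rw [integral_mul_weightedLaplacian_sub hc hce hu hv hφ hφc]
  gcongr ?_ + 2 * ?_
  · refine integral_mono ((h_uv.mul h_lap).integrable_of_hasCompactSupport h_lap_supp.mul_left)
      ((h_uv.mul h_lap.abs).integrable_of_hasCompactSupport h_lap_supp.abs.mul_left) fun z => ?_
    exact mul_le_mul_of_nonneg_left (le_abs_self _) (mul_nonneg (hu0 z) (hv0 z))
  · refine integral_mono (integrable_mul_carreDuChamp hc hv.continuous hu₁ hφ₁ (.inr (.inr hφc)))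
      (integrable_mul_mul hv.continuous (continuous_carreDuChamp hc hu₁ hu₁).sqrt
        (continuous_carreDuChamp hc hφ₁ hφ₁).sqrt (.inr h_grad_supp)) fun z => ?_
    simpa only [mul_assoc] using mul_le_mul_of_nonneg_left
      (carreDuChamp_le_sqrt_mul_sqrt (hc0 · z) u φ) (hv0 z)

end WeightedLaplacian

section Grushin

/-- The weights of the Grushin operator as a `weightedLaplacian`: `1` in the `x`-directions and
`|x|^{2s}` in the `y`-directions. -/
def grushinWeight (s : ℝ) : Fin N₁ ⊕ Fin N₂ → Pt N₁ N₂ → ℝ :=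
  Sum.elim (fun _ _ => 1) (fun _ z => enorm' z.1 ^ (2 * s))

/-- The coordinate vectors of `ℝ^{N₁} × ℝ^{N₂}`, the directions of the Grushin operator as a
`weightedLaplacian`. -/
def coordVec : Fin N₁ ⊕ Fin N₂ → Pt N₁ N₂ :=
  Sum.elim (fun i => (Pi.single i 1, 0)) (fun j => (0, Pi.single j 1))

lemma continuous_grushinWeight {s : ℝ} (hs : 0 ≤ s) (i : Fin N₁ ⊕ Fin N₂) :
    Continuous (grushinWeight s i) := by
  have h_norm : Continuous fun z : Pt N₁ N₂ => enorm' z.1 := by unfold enorm'; fun_prop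
  cases i
  · exact continuous_const
  · exact h_norm.rpow_const fun _ => .inr (by positivity)

lemma grushinWeight_nonneg (s : ℝ) (i : Fin N₁ ⊕ Fin N₂) (z : Pt N₁ N₂) :
    0 ≤ grushinWeight s i z := by
  cases i
  · exact zero_le_one
  · exact Real.rpow_nonneg (Real.sqrt_nonneg _) _

lemma grushinWeight_add_smul_coordVec (s : ℝ) (i : Fin N₁ ⊕ Fin N₂) (z : Pt N₁ N₂) (t : ℝ) :
    grushinWeight s i (z + t • coordVec i) = grushinWeight s i z := by
  cases i <;> simp [grushinWeight, coordVec]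

lemma deriv_update_eq_deriv_add_smul_single {𝕜 ι F : Type*} [NontriviallyNormedField 𝕜]
    [DecidableEq ι] [NormedAddCommGroup F] [NormedSpace 𝕜 F] (f : (ι → 𝕜) → F) (x : ι → 𝕜)
    (i : ι) :
    deriv (fun t => f (Function.update x i t)) (x i) =
      deriv (fun t : 𝕜 => f (x + t • Pi.single i 1)) 0 := by
  have h_update : ∀ t : 𝕜, x + t • Pi.single i 1 = Function.update x i (x i + t) := fun t => by
    ext j
    rcases eq_or_ne j i with rfl | hj <;> simp [*]
  simp only [h_update]
  rw [deriv_comp_const_add (fun t => f (Function.update x i t)), add_zero]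

lemma pX_eq_lineDeriv (i : Fin N₁) (w : Pt N₁ N₂ → ℝ) :
    pX i w = (lineDeriv ℝ w · (coordVec (.inl i))) := by
  funext z
  simpa [pX, lineDeriv, coordVec, Prod.add_def] using
    deriv_update_eq_deriv_add_smul_single (fun x => w (x, z.2)) z.1 i

lemma pY_eq_lineDeriv (j : Fin N₂) (w : Pt N₁ N₂ → ℝ) :
    pY j w = (lineDeriv ℝ w · (coordVec (.inr j))) := by
  funext z
  simpa [pY, lineDeriv, coordVec, Prod.add_def] using
    deriv_update_eq_deriv_add_smul_single (fun y => w (z.1, y)) z.2 j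

lemma grushinLap_eq_weightedLaplacian (s : ℝ) (w : Pt N₁ N₂ → ℝ) :
    grushinLap s w = weightedLaplacian (grushinWeight s) coordVec w := by
  funext z
  simp [grushinLap, lapX, lapY, weightedLaplacian, grushinWeight, pX_eq_lineDeriv,
    pY_eq_lineDeriv, Finset.mul_sum]

lemma grushinGrad_eq_sqrt_carreDuChamp (s : ℝ) (w : Pt N₁ N₂ → ℝ) (z : Pt N₁ N₂) :
    grushinGrad s w z = √(carreDuChamp (grushinWeight s) coordVec w w z) := by
  simp [grushinGrad, carreDuChamp, grushinWeight, pX_eq_lineDeriv, pY_eq_lineDeriv,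
    Finset.mul_sum, sq]

instance isAddHaarMeasure_volume_pt : (volume : Measure (Pt N₁ N₂)).IsAddHaarMeasure :=
  Measure.prod.instIsAddHaarMeasure _ _

lemma integral_mul_grushinLap_sub_le {s : ℝ} (hs : 0 ≤ s) {u v φ : Pt N₁ N₂ → ℝ}
    (hu : ContDiff ℝ 2 u) (hv : ContDiff ℝ 2 v) (hu0 : ∀ z, 0 ≤ u z) (hv0 : ∀ z, 0 ≤ v z)
    (hφ : ContDiff ℝ 2 φ) (hφc : HasCompactSupport φ) :
    (∫ z, u z * φ z * grushinLap s v z) - ∫ z, v z * φ z * grushinLap s u z ≤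
      (∫ z, u z * v z * |grushinLap s φ z|) +
        2 * ∫ z, v z * grushinGrad s u z * grushinGrad s φ z := by
  simp only [grushinLap_eq_weightedLaplacian, grushinGrad_eq_sqrt_carreDuChamp]
  exact integral_mul_weightedLaplacian_sub_le (continuous_grushinWeight hs)
    (grushinWeight_nonneg s) (grushinWeight_add_smul_coordVec s) hu hv hu0 hv0 hφ hφc

theorem parts_estimate_general {s p θ : ℝ} (hs : 0 ≤ s) {u v : Pt N₁ N₂ → ℝ}
    (hu : ContDiff ℝ 2 u) (hv : ContDiff ℝ 2 v) (hu0 : ∀ z, 0 < u z) (hv0 : ∀ z, 0 < v z)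
    (hlap_u : ∀ z, -grushinLap s u z = v z ^ p) (hlap_v : ∀ z, -grushinLap s v z = u z ^ θ)
    {φ : Pt N₁ N₂ → ℝ} (hφ : ContDiff ℝ 2 φ) (hφc : HasCompactSupport φ) :
    (∫ z, v z ^ (p + 1) * φ z) - (∫ z, u z ^ (θ + 1) * φ z) ≤
      (∫ z, u z * v z * |grushinLap s φ z|) +
        2 * ∫ z, v z * grushinGrad s u z * grushinGrad s φ z := by
  have hv_pow : ∀ z, v z ^ (p + 1) * φ z = -(v z * φ z * grushinLap s u z) := fun z => by
    rw [Real.rpow_add_one (hv0 z).ne', ← hlap_u]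
    ring
  have hu_pow : ∀ z, u z ^ (θ + 1) * φ z = -(u z * φ z * grushinLap s v z) := fun z => by
    rw [Real.rpow_add_one (hu0 z).ne', ← hlap_v]
    ring
  simp only [hv_pow, hu_pow, integral_neg, neg_sub_neg]
  exact integral_mul_grushinLap_sub_le hs hu hv (fun z => (hu0 z).le) (fun z => (hv0 z).le) hφ hφc

end Grushin

/-- multiplying `-Δ_s v = u^θ` by `u ζ^{4k}` and integrating by parts gives
`∫ v^{p+1} ζ^{4k} - ∫ u^{θ+1} ζ^{4k}
  ≤ ∫ u v |Δ_s(ζ^{4k})| + 2 ∫ v |∇_s u| |∇_s(ζ^{4k})|`. -/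
theorem parts_estimate (N₁ N₂ : ℕ) (hN₁ : 1 ≤ N₁) (hN₂ : 1 ≤ N₂)
    (s p θ : ℝ) (hs : 0 ≤ s) (hp : 0 < p) (hθ : 0 < θ)
    (u v : Pt N₁ N₂ → ℝ) (hsol : IsLaneEmdenSol s p θ u v)
    (k : ℕ) (hk : 1 ≤ k)
    (ζ : Pt N₁ N₂ → ℝ) (hζ : ContDiff ℝ (⊤ : ℕ∞) ζ) (hζc : HasCompactSupport ζ)
    (hζ0 : ∀ z, 0 ≤ ζ z) (hζ1 : ∀ z, ζ z ≤ 1) :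
    (∫ z, (v z) ^ (p + 1) * ζ z ^ (4 * k)) - (∫ z, (u z) ^ (θ + 1) * ζ z ^ (4 * k)) ≤
      (∫ z, u z * v z * |grushinLap s (fun w => ζ w ^ (4 * k)) z|)
      + 2 * ∫ z, v z * grushinGrad s u z * grushinGrad s (fun w => ζ w ^ (4 * k)) z := by
  obtain ⟨hu, hv, hu0, hv0, hlap_u, hlap_v⟩ := hsol
  exact parts_estimate_general hs (mod_cast contDiff_infty.mp hu 2)
    (mod_cast contDiff_infty.mp hv 2) hu0 hv0 hlap_u hlap_v
    (mod_cast contDiff_infty.mp (hζ.pow _) 2)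
    (hζc.comp_left (g := (· ^ (4 * k))) (zero_pow (by omega)))

end
end

section
/- Let θ > 1/p > 1 > p > 0 (so in particular pθ > 1). If N_s < 2 + α + β, then the Grushin Lane–Emden system −Δ_s u = v^p, −Δ_s v = u^θ, u, v > 0 on ℝ^N admits no smooth stable solution. -/
open MeasureTheory Real

noncomputable section

variable {N₁ N₂ : ℕ}

/-!
Eliminating `ζ` from the linearized system turns stability into the second-order inequality
`θ ∫ u^(θ-1) φ² ≤ p⁻¹ ∫ v^(1-p) (Δ_s φ)²`. Testing it with `φ = u χ^k`, where `Δ_s u = -v^p`,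
bounds `θ ∫ u^(θ+1) χ^(2k)` by `p⁻¹ ∫ v^(p+1) χ^(2k)`, and testing `-Δ_s v = u^θ` with `u χ^(2k)`
bounds `∫ v^(p+1) χ^(2k)` by `∫ u^(θ+1) χ^(2k)`, both up to errors that involve derivatives of the
cutoff `χ` and have lower degree in `u` and `v`. For large `k` the errors are absorbed, and
`θ > 1/p` leaves a bound for `∫ u^(θ+1) χ^(2k)` that depends on `χ` alone. It therefore holds for
all rescaled solutions `R^α u(R x, R^(1+s) y)`, whose energy near the origin grows like
`R^(2+α+β-N_s)`.
-/

section Absorption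

lemma exists_rpow_le_mul_add {κ ε : ℝ} (h0 : 0 ≤ κ) (h1 : κ < 1) (hε : 0 < ε) :
    ∃ C : ℝ, 0 ≤ C ∧ ∀ x : ℝ, 0 ≤ x → x ^ κ ≤ ε * x + C := by
  have hκ : 0 < 1 - κ := sub_pos.2 h1
  set C := ε ^ (-(κ / (1 - κ)))
  have hC : 0 ≤ C := rpow_nonneg hε.le _
  have hCκ : C ^ (1 - κ) * ε ^ κ = 1 := by
    rw [← rpow_mul hε.le, ← rpow_add hε, neg_mul, div_mul_cancel₀ _ hκ.ne', neg_add_cancel,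
      rpow_zero]
  refine ⟨C, hC, fun x hx => ?_⟩
  calc x ^ κ = (ε * x) ^ κ * C ^ (1 - κ) := by
        rw [mul_rpow hε.le hx]
        linear_combination -x ^ κ * hCκ
    _ ≤ κ * (ε * x) + (1 - κ) * C :=
        geom_mean_le_arith_mean2_weighted h0 hκ.le (by positivity) hC (by ring)
    _ ≤ ε * x + C := add_le_add (mul_le_of_le_one_left (by positivity) h1.le)
        (mul_le_of_le_one_left hC (by linarith))

lemma rpow_mul_rpow_le_add_rpow {P Q σ τ a b : ℝ} (hP : 0 < P) (hQ : 0 < Q) (hσ : 0 ≤ σ)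
    (hτ : 0 ≤ τ) (ha : 0 < a) (hb : 0 < b) :
    a ^ σ * b ^ τ ≤ (a ^ P + b ^ Q) ^ (σ / P + τ / Q) := by
  have haP := rpow_pos_of_pos ha P
  have hbQ := rpow_pos_of_pos hb Q
  calc a ^ σ * b ^ τ = (a ^ P) ^ (σ / P) * (b ^ Q) ^ (τ / Q) := by
        rw [← rpow_mul ha.le, ← rpow_mul hb.le, mul_div_cancel₀ σ hP.ne', mul_div_cancel₀ τ hQ.ne']
    _ ≤ (a ^ P + b ^ Q) ^ (σ / P) * (a ^ P + b ^ Q) ^ (τ / Q) := by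
        gcongr <;> linarith
    _ = (a ^ P + b ^ Q) ^ (σ / P + τ / Q) := (rpow_add (by positivity) _ _).symm

-- A large power of the cutoff value `t` makes up for the two factors of `t ^ 2` lost when
-- differentiating it twice, because the degree `κ = σ / P + τ / Q` is less than one.
lemma eventually_rpow_mul_rpow_mul_pow_le {P Q σ τ : ℝ} (hP : 0 < P) (hQ : 0 < Q) (hσ : 0 ≤ σ)
    (hτ : 0 ≤ τ) (hκ : σ / P + τ / Q < 1) :
    ∀ᶠ k : ℕ in Filter.atTop, ∀ ε > 0, ∃ C : ℝ, 0 ≤ C ∧ ∀ a b t : ℝ, 0 < a → 0 < b → 0 ≤ t → t ≤ 1 →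
      a ^ σ * b ^ τ * t ^ (2 * k) ≤ ε * ((a ^ P + b ^ Q) * (t ^ (k + 2)) ^ 2) + C * t := by
  set κ := σ / P + τ / Q
  have hκ0 : 0 ≤ κ := by positivity
  filter_upwards [Filter.eventually_ge_atTop ⌈(1 + 4 * κ) / (2 * (1 - κ))⌉₊] with k hk ε hε
  rw [Nat.ceil_le, div_le_iff₀ (by linarith)] at hk
  obtain ⟨C, hC, hle⟩ := exists_rpow_le_mul_add hκ0 hκ hε
  refine ⟨C, hC, fun a b t ha hb ht ht1 => ?_⟩
  have pow_le : t ^ (2 * k) ≤ ((t ^ (k + 2)) ^ 2) ^ κ * t := by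
    have hexp : (t ^ (k + 2)) ^ 2 = t ^ (2 * (k + 2) : ℝ) := by
      rw [← pow_mul, mul_comm, ← rpow_natCast]
      norm_cast
    calc t ^ (2 * k) = t ^ (2 * k : ℝ) := by norm_cast
      _ ≤ t ^ (2 * (k + 2) * κ + 1) := rpow_le_rpow_of_exponent_ge' ht ht1 (by positivity)
          (by linarith)
      _ = ((t ^ (k + 2)) ^ 2) ^ κ * t := by
          rw [rpow_add_of_nonneg ht (by positivity) zero_le_one, rpow_mul ht, rpow_one, hexp]
  have hX : 0 ≤ a ^ P + b ^ Q := by positivity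
  calc a ^ σ * b ^ τ * t ^ (2 * k)
      ≤ (a ^ P + b ^ Q) ^ κ * (((t ^ (k + 2)) ^ 2) ^ κ * t) :=
        mul_le_mul (rpow_mul_rpow_le_add_rpow hP hQ hσ hτ ha hb) pow_le (by positivity)
          (by positivity)
    _ = ((a ^ P + b ^ Q) * (t ^ (k + 2)) ^ 2) ^ κ * t := by
        rw [mul_rpow hX (by positivity), mul_assoc]
    _ ≤ (ε * ((a ^ P + b ^ Q) * (t ^ (k + 2)) ^ 2) + C) * t :=
        mul_le_mul_of_nonneg_right (hle _ (by positivity)) ht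
    _ ≤ ε * ((a ^ P + b ^ Q) * (t ^ (k + 2)) ^ 2) + C * t := by
        rw [add_mul]
        exact add_le_add_left (mul_le_of_le_one_right (by positivity) ht1) _

lemma exists_le_of_coupled_bounds {q θ : ℝ} (hq : 0 ≤ q) (hqθ : q < θ) :
    ∃ δ > 0, ∀ C : ℝ, 0 ≤ C → ∃ C' : ℝ, ∀ A B : ℝ, 0 ≤ A →
      θ * A ≤ q * B + δ * (A + B) + C → B ≤ A + δ * (A + B) + C → A ≤ C' := by
  have hgap : 0 < θ - q := sub_pos.2 hqθ
  set δ := min (1 / 2) ((θ - q) / (8 * (q + 1)))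
  have hδ0 : 0 < δ := by positivity
  have hδ_half : δ ≤ 1 / 2 := min_le_left _ _
  have hδ_gap : δ * (8 * (q + 1)) ≤ θ - q :=
    (le_div_iff₀ (by positivity)).1 (min_le_right _ _)
  refine ⟨δ, hδ0, fun C hC => ⟨4 * (q + 1) * C / (θ - q), fun A B hA hθA hB => ?_⟩⟩
  have hB_crude : B ≤ 3 * A + 2 * C := by nlinarith
  have hB_fine : B ≤ (1 + 4 * δ) * A + 2 * C := by nlinarith
  rw [le_div_iff₀ hgap]
  have hqB := mul_le_mul_of_nonneg_left hB_fine hq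
  have hδB := mul_le_mul_of_nonneg_left hB_crude hδ0.le
  nlinarith

end Absorption

section DirDeriv

variable {E : Type*} [NormedAddCommGroup E] [NormedSpace ℝ E] {f g : E → ℝ} {F F' : ℝ → ℝ}

/-- The derivative of `f` in the fixed direction `e`, as a function of the base point. It is the
Fréchet derivative applied to `e`, hence `0` where `f` is not differentiable. -/
def dirDeriv (e : E) (f : E → ℝ) (z : E) : ℝ := fderiv ℝ f z e

lemma contDiff_dirDeriv {m n : WithTop ℕ∞} (hf : ContDiff ℝ n f) (hmn : m + 1 ≤ n) (e : E) :
    ContDiff ℝ m (dirDeriv e f) :=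
  (hf.fderiv_right hmn).clm_apply contDiff_const

lemma contDiff_one_dirDeriv (hf : ContDiff ℝ 2 f) (e : E) : ContDiff ℝ 1 (dirDeriv e f) :=
  contDiff_dirDeriv hf one_add_one_eq_two.le e

lemma continuous_dirDeriv (hf : ContDiff ℝ 1 f) (e : E) : Continuous (dirDeriv e f) :=
  (contDiff_dirDeriv (m := 0) hf (zero_add 1).le e).continuous

lemma dirDeriv_add (hf : Differentiable ℝ f) (hg : Differentiable ℝ g) (e : E) :
    dirDeriv e (fun z => f z + g z) = fun z => dirDeriv e f z + dirDeriv e g z := by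
  funext z
  simp [dirDeriv, fderiv_fun_add (hf z) (hg z)]

lemma dirDeriv_mul (hf : Differentiable ℝ f) (hg : Differentiable ℝ g) (e : E) :
    dirDeriv e (fun z => f z * g z) = fun z => f z * dirDeriv e g z + g z * dirDeriv e f z := by
  funext z
  simp [dirDeriv, fderiv_fun_mul (hf z) (hg z)]

lemma dirDeriv_comp (hf : Differentiable ℝ f) (hF : ∀ z, HasDerivAt F (F' (f z)) (f z)) (e : E) :
    dirDeriv e (fun z => F (f z)) = fun z => F' (f z) * dirDeriv e f z := by
  funext z
  have h := ((hF z).comp_hasFDerivAt z (hf z).hasFDerivAt).fderiv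
  simp only [dirDeriv, Function.comp_def] at h ⊢
  simp [h]

lemma dirDeriv_dirDeriv_mul (hf : ContDiff ℝ 2 f) (hg : ContDiff ℝ 2 g) (e : E) (z : E) :
    dirDeriv e (dirDeriv e fun z => f z * g z) z =
      f z * dirDeriv e (dirDeriv e g) z + g z * dirDeriv e (dirDeriv e f) z
        + 2 * (dirDeriv e f z * dirDeriv e g z) := by
  have df := hf.differentiable two_ne_zero
  have dg := hg.differentiable two_ne_zero
  have ddf := (contDiff_one_dirDeriv hf e).differentiable one_ne_zero
  have ddg := (contDiff_one_dirDeriv hg e).differentiable one_ne_zero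
  rw [dirDeriv_mul df dg, dirDeriv_add (df.fun_mul ddg) (dg.fun_mul ddf), dirDeriv_mul df ddg,
    dirDeriv_mul dg ddf]
  ring

lemma dirDeriv_dirDeriv_comp {F'' : ℝ → ℝ} (hf : ContDiff ℝ 2 f)
    (hF : ∀ z, HasDerivAt F (F' (f z)) (f z)) (hF' : ∀ z, HasDerivAt F' (F'' (f z)) (f z))
    (e z : E) :
    dirDeriv e (dirDeriv e fun z => F (f z)) z =
      F' (f z) * dirDeriv e (dirDeriv e f) z + F'' (f z) * (dirDeriv e f z * dirDeriv e f z) := by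
  have df := hf.differentiable two_ne_zero
  have dF' : Differentiable ℝ fun z => F' (f z) := fun z =>
    (hF' z).differentiableAt.comp z (df z)
  rw [dirDeriv_comp df hF, dirDeriv_mul dF'
    ((contDiff_one_dirDeriv hf e).differentiable one_ne_zero), dirDeriv_comp df hF']
  ring

lemma tsupport_dirDeriv_subset (e : E) : tsupport (dirDeriv e f) ⊆ tsupport f :=
  tsupport_fderiv_apply_subset ℝ e

lemma hasCompactSupport_dirDeriv (hf : HasCompactSupport f) (e : E) :
    HasCompactSupport (dirDeriv e f) :=
  hf.fderiv_apply (𝕜 := ℝ) e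

variable [FiniteDimensional ℝ E] [MeasurableSpace E] [BorelSpace E] {μ : Measure E}
  [μ.IsAddHaarMeasure]

lemma integral_mul_dirDeriv_eq_neg {w : E → ℝ} {e : E} (hf : ContDiff ℝ 1 f)
    (hg : ContDiff ℝ 1 g) (hw : Continuous w) (hwe : ∀ z (t : ℝ), w (z + t • e) = w z)
    (hc : HasCompactSupport f ∨ HasCompactSupport g) :
    ∫ z, w z * f z * dirDeriv e g z ∂μ = -∫ z, w z * dirDeriv e f z * g z ∂μ := by
  have integrable_mul {a b : E → ℝ} (ha : Continuous a) (hb : Continuous b)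
      (h : HasCompactSupport a ∨ HasCompactSupport b) :
      Integrable (fun z => w z * a z * b z) μ := by
    refine Continuous.integrable_of_hasCompactSupport (by fun_prop) ?_
    rcases h with h | h
    · exact (h.mul_left (f := w)).mul_right
    · exact h.mul_left
  have hasLineDerivAt {h : E → ℝ} (hh : ContDiff ℝ 1 h) (z : E) :
      HasLineDerivAt ℝ h (dirDeriv e h z) z e :=
    (hh.differentiable one_ne_zero z).hasFDerivAt.hasLineDerivAt e
  have hwf (z : E) : HasLineDerivAt ℝ (fun z => w z * f z) (w z * dirDeriv e f z) z e := by
    have h := hasLineDerivAt hf z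
    unfold HasLineDerivAt at h ⊢
    simpa only [hwe] using h.const_mul (w z)
  simpa using integral_bilinear_hasLineDerivAt_right_eq_neg_left_of_integrable (μ := μ)
    (B := ContinuousLinearMap.mul ℝ ℝ)
    (by simpa using integrable_mul (continuous_dirDeriv hf e) hg.continuous
          (hc.imp_left (hasCompactSupport_dirDeriv · e)))
    (by simpa using integrable_mul hf.continuous (continuous_dirDeriv hg e)
          (hc.imp_right (hasCompactSupport_dirDeriv · e)))
    (by simpa using integrable_mul hf.continuous hg.continuous hc)
    (fun z _ => hwf z) (fun z _ => hasLineDerivAt hg z)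

end DirDeriv

/-- Finitely many directions `dir i` of `E`, with nonnegative continuous weights `weight i` that
are constant along `dir i`. This data is the degenerate elliptic divergence-form operator
`∑ i, weight i • ∂ᵢ²`; invariance of the weights is what makes it symmetric. -/
structure WeightedFrame (ι E : Type*) [NormedAddCommGroup E] [NormedSpace ℝ E] where
  dir : ι → E
  weight : ι → E → ℝ
  weight_nonneg : ∀ i z, 0 ≤ weight i z
  continuous_weight : ∀ i, Continuous (weight i)
  weight_add_smul_dir : ∀ i z (t : ℝ), weight i (z + t • dir i) = weight i z

namespace WeightedFrame

variable {ι E : Type*} [Fintype ι] [NormedAddCommGroup E] [NormedSpace ℝ E]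
  (W : WeightedFrame ι E) {f g : E → ℝ}

/-- The second-order operator of a weighted frame. -/
def lap (f : E → ℝ) (z : E) : ℝ :=
  ∑ i, W.weight i z * dirDeriv (W.dir i) (dirDeriv (W.dir i) f) z

/-- The carré du champ `Γ(f, g)` of the operator `W.lap`; `Γ(f, f)` plays the role of `|∇f|²`. -/
def carre (f g : E → ℝ) (z : E) : ℝ :=
  ∑ i, W.weight i z * (dirDeriv (W.dir i) f z * dirDeriv (W.dir i) g z)

lemma carre_comm (f g : E → ℝ) (z : E) : W.carre f g z = W.carre g f z := by
  simp only [carre, mul_comm (dirDeriv _ f z)]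

lemma carre_self_nonneg (f : E → ℝ) (z : E) : 0 ≤ W.carre f f z :=
  Finset.sum_nonneg fun i _ => mul_nonneg (W.weight_nonneg i z) (mul_self_nonneg _)

lemma carre_sq_le (f g : E → ℝ) (z : E) :
    W.carre f g z ^ 2 ≤ W.carre f f z * W.carre g g z := by
  refine Finset.sum_sq_le_sum_mul_sum_of_sq_le_mul Finset.univ
    (fun i _ => mul_nonneg (W.weight_nonneg i z) (mul_self_nonneg _))
    (fun i _ => mul_nonneg (W.weight_nonneg i z) (mul_self_nonneg _)) fun i _ => le_of_eq ?_
  ring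

lemma two_mul_carre_le (f g : E → ℝ) (a b : ℝ) {ε : ℝ} (hε : 0 < ε) (z : E) :
    2 * (a * b * W.carre f g z) ≤ ε * a ^ 2 * W.carre f f z + ε⁻¹ * b ^ 2 * W.carre g g z := by
  simp only [carre, Finset.mul_sum, ← Finset.sum_add_distrib]
  refine Finset.sum_le_sum fun i _ => ?_
  have h := mul_le_mul_of_nonneg_left (two_mul_le_add_mul_sq (a := a * dirDeriv (W.dir i) f z)
    (b := b * dirDeriv (W.dir i) g z) hε) (W.weight_nonneg i z)
  linarith

lemma carre_mul_left (hf : Differentiable ℝ f) (hg : Differentiable ℝ g) (h : E → ℝ) (z : E) :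
    W.carre (fun z => f z * g z) h z = f z * W.carre g h z + g z * W.carre f h z := by
  simp only [carre, dirDeriv_mul hf hg, Finset.mul_sum, ← Finset.sum_add_distrib]
  exact Finset.sum_congr rfl fun i _ => by ring

lemma carre_comp_left {F F' : ℝ → ℝ} (hf : Differentiable ℝ f)
    (hF : ∀ z, HasDerivAt F (F' (f z)) (f z)) (h : E → ℝ) (z : E) :
    W.carre (fun z => F (f z)) h z = F' (f z) * W.carre f h z := by
  simp only [carre, dirDeriv_comp hf hF, Finset.mul_sum]
  exact Finset.sum_congr rfl fun i _ => by ring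

lemma lap_mul (hf : ContDiff ℝ 2 f) (hg : ContDiff ℝ 2 g) (z : E) :
    W.lap (fun z => f z * g z) z = f z * W.lap g z + g z * W.lap f z + 2 * W.carre f g z := by
  simp only [lap, carre, dirDeriv_dirDeriv_mul hf hg, Finset.mul_sum, ← Finset.sum_add_distrib]
  exact Finset.sum_congr rfl fun i _ => by ring

lemma lap_comp {F F' F'' : ℝ → ℝ} (hf : ContDiff ℝ 2 f)
    (hF : ∀ z, HasDerivAt F (F' (f z)) (f z)) (hF' : ∀ z, HasDerivAt F' (F'' (f z)) (f z))
    (z : E) :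
    W.lap (fun z => F (f z)) z = F' (f z) * W.lap f z + F'' (f z) * W.carre f f z := by
  simp only [lap, carre, dirDeriv_dirDeriv_comp hf hF hF', Finset.mul_sum,
    ← Finset.sum_add_distrib]
  exact Finset.sum_congr rfl fun i _ => by ring

lemma carre_pow_left (hf : Differentiable ℝ f) (n : ℕ) (h : E → ℝ) (z : E) :
    W.carre (fun z => f z ^ n) h z = n * f z ^ (n - 1) * W.carre f h z :=
  W.carre_comp_left (F := fun x => x ^ n) (F' := fun x => n * x ^ (n - 1)) hf
    (fun z => hasDerivAt_pow n (f z)) h z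

lemma carre_rpow_left (hf : Differentiable ℝ f) (hf0 : ∀ z, 0 < f z) (c : ℝ) (h : E → ℝ)
    (z : E) : W.carre (fun z => f z ^ c) h z = c * f z ^ (c - 1) * W.carre f h z :=
  W.carre_comp_left (F := fun x => x ^ c) (F' := fun x => c * x ^ (c - 1)) hf
    (fun z => hasDerivAt_rpow_const (.inl (hf0 z).ne')) h z

lemma lap_pow_add_two (hf : ContDiff ℝ 2 f) (n : ℕ) (z : E) :
    W.lap (fun z => f z ^ (n + 2)) z =
      (n + 2) * f z ^ n * (f z * W.lap f z + (n + 1) * W.carre f f z) := by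
  rw [W.lap_comp (F := fun x => x ^ (n + 2)) (F' := fun x => (n + 2 : ℕ) * x ^ (n + 1))
    (F'' := fun x => (n + 2 : ℕ) * ((n + 1 : ℕ) * x ^ n)) hf (fun z => hasDerivAt_pow (n + 2) (f z))
    (fun z => (hasDerivAt_pow (n + 1) (f z)).const_mul _)]
  push_cast
  ring

lemma lap_const_mul_sq (hf : ContDiff ℝ 2 f) (c : ℝ) (z : E) :
    W.lap (fun z => c * f z ^ 2) z = 2 * c * (f z * W.lap f z + W.carre f f z) := by
  rw [W.lap_comp (F := fun x => c * x ^ 2) (F' := fun x => c * (2 * x)) (F'' := fun _ => c * 2) hf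
    (fun z => by simpa using (hasDerivAt_pow 2 (f z)).const_mul c)
    (fun z => by simpa using ((hasDerivAt_id (f z)).const_mul 2).const_mul c)]
  ring

lemma lap_rpow (hf : ContDiff ℝ 2 f) (hf0 : ∀ z, 0 < f z) (c : ℝ) (z : E) :
    W.lap (fun z => f z ^ c) z =
      c * f z ^ (c - 1) * W.lap f z + c * ((c - 1) * f z ^ (c - 1 - 1)) * W.carre f f z := by
  have hder (c : ℝ) (z : E) : HasDerivAt (fun x : ℝ => x ^ c) (c * f z ^ (c - 1)) (f z) :=
    hasDerivAt_rpow_const (.inl (hf0 z).ne')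
  exact W.lap_comp (F' := fun x => c * x ^ (c - 1))
    (F'' := fun x => c * ((c - 1) * x ^ (c - 1 - 1)))
    hf (hder c) (fun z => (hder (c - 1) z).const_mul c) z

lemma lap_mul_mul_self {r ξ : E → ℝ} (hr : ContDiff ℝ 2 r) (hξ : ContDiff ℝ 2 ξ) (z : E) :
    W.lap (fun z => r z * (r z * ξ z)) z =
      2 * r z * W.lap (fun z => r z * ξ z) z - r z ^ 2 * W.lap ξ z + 2 * ξ z * W.carre r r z := by
  rw [W.lap_mul hr (hr.mul hξ), W.lap_mul hr hξ, W.carre_comm r fun z => r z * ξ z,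
    W.carre_mul_left (hr.differentiable two_ne_zero) (hξ.differentiable two_ne_zero),
    W.carre_comm ξ]
  ring

lemma continuous_lap (hf : ContDiff ℝ 2 f) : Continuous (W.lap f) :=
  continuous_finsetSum _ fun i _ => (W.continuous_weight i).mul
    (continuous_dirDeriv (contDiff_one_dirDeriv hf _) _)

lemma continuous_carre (hf : ContDiff ℝ 1 f) (hg : ContDiff ℝ 1 g) : Continuous (W.carre f g) :=
  continuous_finsetSum _ fun i _ => (W.continuous_weight i).mul
    ((continuous_dirDeriv hf _).mul (continuous_dirDeriv hg _))

lemma lap_eq_zero_of_notMem_tsupport {z : E} (hz : z ∉ tsupport f) : W.lap f z = 0 :=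
  Finset.sum_eq_zero fun _ _ => mul_eq_zero_of_right _ <| image_eq_zero_of_notMem_tsupport fun h =>
    hz (tsupport_dirDeriv_subset _ (tsupport_dirDeriv_subset _ h))

lemma carre_eq_zero_of_notMem_tsupport {z : E} (hz : z ∉ tsupport f) : W.carre f g z = 0 :=
  Finset.sum_eq_zero fun _ _ => mul_eq_zero_of_right _ <| mul_eq_zero_of_left
    (image_eq_zero_of_notMem_tsupport fun h => hz (tsupport_dirDeriv_subset _ h)) _

lemma hasCompactSupport_lap (hf : HasCompactSupport f) : HasCompactSupport (W.lap f) :=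
  .intro hf fun _ => W.lap_eq_zero_of_notMem_tsupport

/-- `(u, v)` is a positive classical solution of `-L u = v ^ p`, `-L v = u ^ θ`, where `L` is the
operator of the weighted frame. -/
structure IsLaneEmden (p θ : ℝ) (u v : E → ℝ) : Prop where
  contDiff_u : ContDiff ℝ 2 u
  contDiff_v : ContDiff ℝ 2 v
  u_pos : ∀ z, 0 < u z
  v_pos : ∀ z, 0 < v z
  lap_u : ∀ z, W.lap u z = -v z ^ p
  lap_v : ∀ z, W.lap v z = -u z ^ θ

/-- The commutator `[L, ψ] u = L (u ψ) - ψ L u` of the operator with multiplication by `ψ`. It is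
of first order in `u` and supported where `ψ` is. -/
def commutator (ψ u : E → ℝ) (z : E) : ℝ := W.lap (fun z => u z * ψ z) z - ψ z * W.lap u z

variable {W} {p θ : ℝ} {u v ψ : E → ℝ}

lemma commutator_eq (hu : ContDiff ℝ 2 u) (hψ : ContDiff ℝ 2 ψ) (z : E) :
    W.commutator ψ u z = u z * W.lap ψ z + 2 * W.carre u ψ z := by
  rw [commutator, W.lap_mul hu hψ]
  ring

lemma continuous_commutator (hu : ContDiff ℝ 2 u) (hψ : ContDiff ℝ 2 ψ) :
    Continuous (W.commutator ψ u) :=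
  (W.continuous_lap (hu.mul hψ)).sub (hψ.continuous.mul (W.continuous_lap hu))

lemma commutator_eq_zero_of_notMem_tsupport {z : E} (hz : z ∉ tsupport ψ) :
    W.commutator ψ u z = 0 := by
  have h : z ∉ tsupport fun z => u z * ψ z := fun h => hz (tsupport_mul_subset_right h)
  rw [commutator, W.lap_eq_zero_of_notMem_tsupport h, image_eq_zero_of_notMem_tsupport hz]
  ring

lemma lap_mul_sq (hu : ContDiff ℝ 2 u) (hψ : ContDiff ℝ 2 ψ) (z : E) :
    W.lap (fun z => u z * ψ z * ψ z) z =
      ψ z ^ 2 * W.lap u z + 2 * ψ z * W.commutator ψ u z + 2 * u z * W.carre ψ ψ z := by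
  rw [W.lap_mul (hu.mul hψ) hψ, W.carre_mul_left (hu.differentiable two_ne_zero)
    (hψ.differentiable two_ne_zero), commutator, W.lap_mul hu hψ]
  ring

-- Differentiating `v ^ (1 - p)` produces `-p (1 - p) v ^ (-p-1) Γ(v, v)`, which absorbs the cross
-- term `4 (1 - p) v ^ (-p) σ Γ(v, σ)`.
lemma lap_rpow_mul_sq_le {σ : E → ℝ} (hp0 : 0 < p) (hp1 : p ≤ 1) (hv : ContDiff ℝ 2 v)
    (hv0 : ∀ z, 0 < v z) (hvL : ∀ z, W.lap v z ≤ 0) (hσ : ContDiff ℝ 2 σ) (z : E) :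
    W.lap (fun z => v z ^ (1 - p) * σ z ^ 2) z ≤
      v z ^ (1 - p) * (W.lap (fun z => σ z ^ 2) z + (1 - p) * (4 / p * W.carre σ σ z)) := by
  rw [W.lap_mul (hv.rpow_const_of_ne fun z => (hv0 z).ne') (hσ.pow 2), W.lap_rpow hv hv0,
    W.carre_rpow_left (hv.differentiable two_ne_zero) hv0, W.carre_comm v fun z => σ z ^ 2,
    W.carre_pow_left (hσ.differentiable two_ne_zero), W.carre_comm σ]
  set y := v z ^ (1 - p - 1 - 1)
  have hy : 0 < y := rpow_pos_of_pos (hv0 z) _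
  have y_mul : v z ^ (1 - p - 1) = y * v z := by
    rw [← rpow_add_one (hv0 z).ne', sub_add_cancel]
  have y_mul_mul : v z ^ (1 - p) = y * v z * v z := by
    rw [← y_mul, ← rpow_add_one (hv0 z).ne', sub_add_cancel]
  have cross : 4 * v z * σ z * W.carre v σ z ≤
      p * σ z ^ 2 * W.carre v v z + 4 / p * v z ^ 2 * W.carre σ σ z := by
    convert W.two_mul_carre_le v σ (σ z) (2 * v z) hp0 z using 1 <;> ring
  have gap := mul_nonneg (mul_nonneg (sub_nonneg.2 hp1) hy.le) (sub_nonneg.2 cross)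
  have superharmonic := mul_nonneg (mul_nonneg (sub_nonneg.2 hp1) hy.le)
    (mul_nonneg (mul_nonneg (hv0 z).le (sq_nonneg (σ z))) (neg_nonneg.2 (hvL z)))
  simp only [y_mul, y_mul_mul, Nat.cast_ofNat, Nat.add_one_sub_one, pow_one]
  linarith

namespace IsLaneEmden

lemma continuous_u_rpow (h : W.IsLaneEmden p θ u v) (c : ℝ) : Continuous fun z => u z ^ c :=
  h.contDiff_u.continuous.rpow_const fun z => .inl (h.u_pos z).ne'

lemma continuous_v_rpow (h : W.IsLaneEmden p θ u v) (c : ℝ) : Continuous fun z => v z ^ c :=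
  h.contDiff_v.continuous.rpow_const fun z => .inl (h.v_pos z).ne'

lemma v_rpow_one_sub_mul_rpow (h : W.IsLaneEmden p θ u v) (z : E) :
    v z ^ (1 - p) * v z ^ p = v z := by
  rw [← rpow_add (h.v_pos z), sub_add_cancel, rpow_one]

lemma lap_v_nonpos (h : W.IsLaneEmden p θ u v) (z : E) : W.lap v z ≤ 0 :=
  (h.lap_v z).trans_le (neg_nonpos.2 (rpow_pos_of_pos (h.u_pos z) _).le)

end IsLaneEmden

variable (W) in
/-- `χ` is a cutoff function with values in `[0, 1]`, whose `W.lap` and squared gradient are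
bounded by `D`. -/
structure IsCutoff (χ : E → ℝ) (D : ℝ) : Prop where
  contDiff : ContDiff ℝ 2 χ
  hasCompactSupport : HasCompactSupport χ
  nonneg : ∀ z, 0 ≤ χ z
  le_one : ∀ z, χ z ≤ 1
  abs_lap_le : ∀ z, |W.lap χ z| ≤ D
  carre_self_le : ∀ z, W.carre χ χ z ≤ D

variable (W) in
lemma exists_isCutoff {χ : E → ℝ} (hχ : ContDiff ℝ 2 χ) (hc : HasCompactSupport χ)
    (h0 : ∀ z, 0 ≤ χ z) (h1 : ∀ z, χ z ≤ 1) : ∃ D, W.IsCutoff χ D := by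
  have hχ1 : ContDiff ℝ 1 χ := hχ.of_le one_le_two
  obtain ⟨D₁, hD₁⟩ := (W.continuous_lap hχ).bounded_above_of_compact_support
    (W.hasCompactSupport_lap hc)
  obtain ⟨D₂, hD₂⟩ := (W.continuous_carre hχ1 hχ1).bounded_above_of_compact_support
    (.intro hc fun _ => W.carre_eq_zero_of_notMem_tsupport)
  exact ⟨max D₁ D₂, hχ, hc, h0, h1, fun z => (hD₁ z).trans (le_max_left _ _),
    fun z => (le_abs_self _).trans ((hD₂ z).trans (le_max_right _ _))⟩

namespace IsCutoff

variable {χ : E → ℝ} {D : ℝ}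

lemma bound_nonneg (h : W.IsCutoff χ D) : 0 ≤ D := (abs_nonneg _).trans (h.abs_lap_le 0)

lemma hasCompactSupport_pow (h : W.IsCutoff χ D) {n : ℕ} (hn : n ≠ 0) :
    HasCompactSupport fun z => χ z ^ n :=
  h.hasCompactSupport.comp_left (g := fun t : ℝ => t ^ n) (zero_pow hn)

lemma abs_lap_pow_le (h : W.IsCutoff χ D) (n : ℕ) (z : E) :
    |W.lap (fun z => χ z ^ (n + 2)) z| ≤ (n + 2) ^ 2 * D * χ z ^ n := by
  have inner : |χ z * W.lap χ z + (n + 1) * W.carre χ χ z| ≤ (n + 2) * D := by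
    calc |χ z * W.lap χ z + (n + 1) * W.carre χ χ z|
        ≤ χ z * |W.lap χ z| + (n + 1) * W.carre χ χ z := by
          refine (abs_add_le _ _).trans_eq ?_
          rw [abs_mul, abs_of_nonneg (h.nonneg z), abs_of_nonneg
            (mul_nonneg (by positivity) (W.carre_self_nonneg χ z))]
      _ ≤ 1 * D + (n + 1) * D := add_le_add
          (mul_le_mul (h.le_one z) (h.abs_lap_le z) (abs_nonneg _) zero_le_one)
          (mul_le_mul_of_nonneg_left (h.carre_self_le z) (by positivity))
      _ = (n + 2) * D := by ring
  have hχ := pow_nonneg (h.nonneg z) n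
  rw [W.lap_pow_add_two h.contDiff, abs_mul, abs_of_nonneg (by positivity)]
  linarith [mul_le_mul_of_nonneg_left inner (by positivity : 0 ≤ (n + 2) * χ z ^ n)]

lemma carre_self_pow_le (h : W.IsCutoff χ D) (n : ℕ) (z : E) :
    W.carre (fun z => χ z ^ (n + 1)) (fun z => χ z ^ (n + 1)) z ≤
      (n + 1) ^ 2 * D * χ z ^ (2 * n) := by
  have hχ := h.contDiff.differentiable two_ne_zero
  have hpos : 0 ≤ (n + 1) ^ 2 * χ z ^ (2 * n) := mul_nonneg (by positivity)
    (pow_nonneg (h.nonneg z) _)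
  calc W.carre (fun z => χ z ^ (n + 1)) (fun z => χ z ^ (n + 1)) z
      = (n + 1) ^ 2 * χ z ^ (2 * n) * W.carre χ χ z := by
        rw [W.carre_pow_left hχ, W.carre_comm, W.carre_pow_left hχ, Nat.add_sub_cancel]
        push_cast
        ring
    _ ≤ (n + 1) ^ 2 * χ z ^ (2 * n) * D := mul_le_mul_of_nonneg_left (h.carre_self_le z) hpos
    _ = (n + 1) ^ 2 * D * χ z ^ (2 * n) := by ring

lemma commutator_sq_le (h : W.IsCutoff χ D) (hu : ContDiff ℝ 2 u) (k : ℕ) (z : E) :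
    W.commutator (fun z => χ z ^ (k + 2)) u z ^ 2 ≤
      2 * ((k + 2) ^ 2 * D) ^ 2 * u z ^ 2 * χ z ^ (2 * k)
        + 8 * ((k + 2) ^ 2 * D) * χ z ^ (2 * k + 2) * W.carre u u z := by
  rw [commutator_eq hu (h.contDiff.pow _)]
  have lap_sq : W.lap (fun z => χ z ^ (k + 2)) z ^ 2 ≤
      ((k + 2) ^ 2 * D) ^ 2 * χ z ^ (2 * k) :=
    (sq_le_sq.2 ((h.abs_lap_pow_le k z).trans (le_abs_self _))).trans_eq (by ring)
  have carre_sq : W.carre u (fun z => χ z ^ (k + 2)) z ^ 2 ≤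
      W.carre u u z * ((k + 2) ^ 2 * D * χ z ^ (2 * k + 2)) := by
    refine (W.carre_sq_le u _ z).trans (mul_le_mul_of_nonneg_left ?_ (W.carre_self_nonneg u z))
    exact (h.carre_self_pow_le (k + 1) z).trans_eq (by push_cast; ring)
  have split := two_mul_le_add_sq (u z * W.lap (fun z => χ z ^ (k + 2)) z)
    (2 * W.carre u (fun z => χ z ^ (k + 2)) z)
  have lap_sq_mul := mul_le_mul_of_nonneg_left lap_sq (sq_nonneg (u z))
  linarith

end IsCutoff

/-- The zeroth-order quantity which, localized by a cutoff, dominates the error terms of the energy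
estimates. Each summand has lower degree than `u ^ (θ + 1) + v ^ (p + 1)`. -/
def lowerOrder (p : ℝ) (u v : E → ℝ) (z : E) : ℝ := u z * v z + u z ^ 2 * v z ^ (1 - p)

lemma IsLaneEmden.continuous_lowerOrder (h : W.IsLaneEmden p θ u v) :
    Continuous (lowerOrder p u v) :=
  (h.contDiff_u.continuous.mul h.contDiff_v.continuous).add
    ((h.contDiff_u.continuous.pow 2).mul (h.continuous_v_rpow _))

lemma IsCutoff.lap_rpow_mul_sq_pow_le {χ : E → ℝ} {D : ℝ} (hχ : W.IsCutoff χ D) (hp0 : 0 < p)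
    (hp1 : p ≤ 1) (hv : ContDiff ℝ 2 v) (hv0 : ∀ z, 0 < v z) (hvL : ∀ z, W.lap v z ≤ 0) (k : ℕ)
    (z : E) :
    W.lap (fun z => v z ^ (1 - p) * (χ z ^ (k + 1)) ^ 2) z ≤
      4 * ((k + 2) ^ 2 * D) * (1 + p⁻¹) * (v z ^ (1 - p) * χ z ^ (2 * k)) := by
  have hD := hχ.bound_nonneg
  have hχk := pow_nonneg (hχ.nonneg z) (2 * k)
  have lap_le : W.lap (fun z => (χ z ^ (k + 1)) ^ 2) z ≤
      4 * ((k + 2) ^ 2 * D) * χ z ^ (2 * k) := by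
    simp only [← pow_mul, add_mul, one_mul, mul_comm k 2]
    refine (le_of_abs_le (hχ.abs_lap_pow_le (2 * k) z)).trans (mul_le_mul_of_nonneg_right ?_ hχk)
    rw [← mul_assoc]
    refine mul_le_mul_of_nonneg_right ?_ hD
    push_cast
    nlinarith [k.cast_nonneg (α := ℝ)]
  have carre_le : (1 - p) * (4 / p * W.carre (fun z => χ z ^ (k + 1)) (fun z => χ z ^ (k + 1)) z) ≤
      4 / p * ((k + 2) ^ 2 * D * χ z ^ (2 * k)) := by
    refine (mul_le_of_le_one_left (mul_nonneg (by positivity) (W.carre_self_nonneg _ z))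
      (by linarith)).trans (mul_le_mul_of_nonneg_left ?_ (by positivity))
    refine (hχ.carre_self_pow_le k z).trans ?_
    gcongr
    norm_num
  refine (lap_rpow_mul_sq_le hp0 hp1 hv hv0 hvL (hχ.contDiff.pow _) z).trans ?_
  refine (mul_le_mul_of_nonneg_left (add_le_add lap_le carre_le)
    (rpow_pos_of_pos (hv0 z) _).le).trans_eq ?_
  ring

variable [MeasurableSpace E] [BorelSpace E] {μ : Measure E} [μ.IsAddHaarMeasure]

variable (W) in
lemma integrable_mul_lap (hf : Continuous f) (hg : ContDiff ℝ 2 g)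
    (hc : HasCompactSupport f ∨ HasCompactSupport g) :
    Integrable (fun z => f z * W.lap g z) μ := by
  refine (hf.mul (W.continuous_lap hg)).integrable_of_hasCompactSupport ?_
  rcases hc with hc | hc
  · exact hc.mul_right
  · exact (W.hasCompactSupport_lap hc).mul_left

variable (W μ) in
/-- The stability inequality of a solution of the Lane–Emden system: the second-order form of
linearized stability, in which the second component of the linearization is eliminated. -/
def StabilityInequality (p θ : ℝ) (u v : E → ℝ) : Prop :=
  ∀ φ : E → ℝ, ContDiff ℝ 2 φ → HasCompactSupport φ →
    θ * ∫ z, u z ^ (θ - 1) * φ z ^ 2 ∂μ ≤ p⁻¹ * ∫ z, v z ^ (1 - p) * W.lap φ z ^ 2 ∂μ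

namespace IsLaneEmden

lemma integrable_u_rpow_mul_sq (h : W.IsLaneEmden p θ u v) (c : ℝ) (hψ : Continuous ψ)
    (hc : HasCompactSupport ψ) : Integrable (fun z => u z ^ c * ψ z ^ 2) μ :=
  ((h.continuous_u_rpow c).mul (hψ.pow 2)).integrable_of_hasCompactSupport
    (.intro hc fun z hz => by simp [image_eq_zero_of_notMem_tsupport hz])

lemma integrable_v_rpow_mul_sq (h : W.IsLaneEmden p θ u v) (c : ℝ) (hψ : Continuous ψ)
    (hc : HasCompactSupport ψ) : Integrable (fun z => v z ^ c * ψ z ^ 2) μ :=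
  ((h.continuous_v_rpow c).mul (hψ.pow 2)).integrable_of_hasCompactSupport
    (.intro hc fun z hz => by simp [image_eq_zero_of_notMem_tsupport hz])

lemma integrable_v_rpow_mul_commutator_sq (h : W.IsLaneEmden p θ u v) (c : ℝ)
    (hψ : ContDiff ℝ 2 ψ) (hc : HasCompactSupport ψ) :
    Integrable (fun z => v z ^ c * W.commutator ψ u z ^ 2) μ :=
  ((h.continuous_v_rpow c).mul ((continuous_commutator h.contDiff_u hψ).pow 2)
    ).integrable_of_hasCompactSupport
      (.intro hc fun z hz => by simp [commutator_eq_zero_of_notMem_tsupport hz])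

lemma integrable_mul_mul_carre_self (h : W.IsLaneEmden p θ u v) (hψ : ContDiff ℝ 2 ψ)
    (hc : HasCompactSupport ψ) : Integrable (fun z => u z * v z * W.carre ψ ψ z) μ :=
  have hψ1 : ContDiff ℝ 1 ψ := hψ.of_le one_le_two
  ((h.contDiff_u.continuous.mul h.contDiff_v.continuous).mul (W.continuous_carre hψ1 hψ1)
    ).integrable_of_hasCompactSupport
      (.intro hc fun z hz => by simp [W.carre_eq_zero_of_notMem_tsupport hz])

lemma integrable_lowerOrder_mul_pow {χ : E → ℝ} (h : W.IsLaneEmden p θ u v) (hχ : Continuous χ)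
    (hc : HasCompactSupport χ) {n : ℕ} (hn : n ≠ 0) :
    Integrable (fun z => lowerOrder p u v z * χ z ^ n) μ :=
  (h.continuous_lowerOrder.mul (hχ.pow n)).integrable_of_hasCompactSupport
    (.intro hc fun z hz => by simp [image_eq_zero_of_notMem_tsupport hz, hn])

-- The stability inequality tested with `u ψ`.
lemma integral_u_le_of_stable (h : W.IsLaneEmden p θ u v) (hp0 : 0 < p)
    (hst : W.StabilityInequality μ p θ u v) (hψ : ContDiff ℝ 2 ψ) (hc : HasCompactSupport ψ)
    {ε : ℝ} (hε : 0 < ε) :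
    θ * ∫ z, u z ^ (θ + 1) * ψ z ^ 2 ∂μ ≤
      p⁻¹ * ((1 + ε) * ∫ z, v z ^ (p + 1) * ψ z ^ 2 ∂μ
        + (1 + ε⁻¹) * ∫ z, v z ^ (1 - p) * W.commutator ψ u z ^ 2 ∂μ) := by
  have integrable_v := h.integrable_v_rpow_mul_sq (μ := μ) (p + 1) hψ.continuous hc
  have integrable_commutator := h.integrable_v_rpow_mul_commutator_sq (μ := μ) (1 - p) hψ hc
  have integrand_u (z : E) : u z ^ (θ - 1) * (u z * ψ z) ^ 2 = u z ^ (θ + 1) * ψ z ^ 2 := by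
    rw [mul_pow, ← mul_assoc, ← rpow_two, ← rpow_add (h.u_pos z)]
    ring_nf
  have pointwise (z : E) : v z ^ (1 - p) * W.lap (fun z => u z * ψ z) z ^ 2 ≤
      (1 + ε) * (v z ^ (p + 1) * ψ z ^ 2)
        + (1 + ε⁻¹) * (v z ^ (1 - p) * W.commutator ψ u z ^ 2) := by
    have hlap : W.lap (fun z => u z * ψ z) z = W.commutator ψ u z - ψ z * v z ^ p := by
      rw [commutator, h.lap_u]
      ring
    have weight : v z ^ (p + 1) = v z ^ (1 - p) * (v z ^ p) ^ 2 := by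
      rw [← rpow_two, ← rpow_mul (h.v_pos z).le, ← rpow_add (h.v_pos z)]
      ring_nf
    have young := mul_le_mul_of_nonneg_left (two_mul_le_add_mul_sq (a := ψ z * v z ^ p)
      (b := -W.commutator ψ u z) hε) (rpow_pos_of_pos (h.v_pos z) (1 - p)).le
    rw [hlap, weight]
    linarith
  have key := hst _ (h.contDiff_u.mul hψ) hc.mul_left
  simp only [integrand_u] at key
  refine key.trans (mul_le_mul_of_nonneg_left ?_ (inv_nonneg.2 hp0.le))
  rw [← integral_const_mul, ← integral_const_mul, ← integral_add (integrable_v.const_mul _)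
    (integrable_commutator.const_mul _)]
  refine integral_mono ?_ ((integrable_v.const_mul _).add (integrable_commutator.const_mul _))
    pointwise
  exact ((h.continuous_v_rpow _).mul
    ((W.continuous_lap (h.contDiff_u.mul hψ)).pow 2)).integrable_of_hasCompactSupport
      (.intro hc fun z hz => by
        simp [W.lap_eq_zero_of_notMem_tsupport fun hz' => hz (tsupport_mul_subset_right hz')])

lemma integral_mul_mul_carre_self_le {χ : E → ℝ} {D : ℝ} (h : W.IsLaneEmden p θ u v)
    (hχ : W.IsCutoff χ D) {k : ℕ} (hk : k ≠ 0) :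
    ∫ z, u z * v z * W.carre (fun z => χ z ^ (k + 2)) (fun z => χ z ^ (k + 2)) z ∂μ ≤
      (k + 2) ^ 2 * D * ∫ z, lowerOrder p u v z * χ z ^ (2 * k) ∂μ := by
  rw [← integral_const_mul]
  refine integral_mono (h.integrable_mul_mul_carre_self (hχ.contDiff.pow _)
    (hχ.hasCompactSupport_pow (k + 1).succ_ne_zero))
    ((h.integrable_lowerOrder_mul_pow hχ.contDiff.continuous hχ.hasCompactSupport
      (by omega)).const_mul _) fun z => ?_
  have hu := (h.u_pos z).le
  have hv := (h.v_pos z).le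
  have hD := hχ.bound_nonneg
  have hχ0 := hχ.nonneg z
  have carre_le : W.carre (fun z => χ z ^ (k + 2)) (fun z => χ z ^ (k + 2)) z ≤
      (k + 2) ^ 2 * D * χ z ^ (2 * k) := by
    refine (hχ.carre_self_pow_le (k + 1) z).trans ?_
    have := pow_le_pow_of_le_one hχ0 (hχ.le_one z) (show 2 * k ≤ 2 * (k + 1) by omega)
    calc _ = (k + 2) ^ 2 * D * χ z ^ (2 * (k + 1)) := by push_cast; ring
      _ ≤ _ := by gcongr
  calc u z * v z * W.carre (fun z => χ z ^ (k + 2)) (fun z => χ z ^ (k + 2)) z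
      ≤ u z * v z * ((k + 2) ^ 2 * D * χ z ^ (2 * k)) := by gcongr
    _ ≤ (u z * v z + u z ^ 2 * v z ^ (1 - p)) * ((k + 2) ^ 2 * D * χ z ^ (2 * k)) := by
        gcongr
        exact le_add_of_nonneg_right (by positivity)
    _ = (k + 2) ^ 2 * D * (lowerOrder p u v z * χ z ^ (2 * k)) := by rw [lowerOrder]; ring

-- Both summands of `lowerOrder` have degree less than one relative to `u ^ (θ + 1)` and
-- `v ^ (p + 1)`, and both conditions amount to `1 < p θ`.
variable (μ) in
lemma eventually_integral_lowerOrder_le {χ : E → ℝ} {D : ℝ} (hχ : W.IsCutoff χ D) (hp0 : 0 < p)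
    (hp1 : p ≤ 1) (hθ : 0 < θ) (hpθ : 1 < p * θ) :
    ∀ᶠ k : ℕ in Filter.atTop, ∀ ε > 0, ∃ C : ℝ, 0 ≤ C ∧ ∀ u v : E → ℝ, W.IsLaneEmden p θ u v →
      ∫ z, lowerOrder p u v z * χ z ^ (2 * k) ∂μ ≤
        ε * (∫ z, u z ^ (θ + 1) * (χ z ^ (k + 2)) ^ 2 ∂μ
          + ∫ z, v z ^ (p + 1) * (χ z ^ (k + 2)) ^ 2 ∂μ) + C := by
  have degree_uv : 1 / (θ + 1) + 1 / (p + 1) < 1 := by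
    rw [div_add_div _ _ (by positivity) (by positivity), div_lt_one (by positivity)]
    linarith
  have degree_uuv : 2 / (θ + 1) + (1 - p) / (p + 1) < 1 := by
    rw [div_add_div _ _ (by positivity) (by positivity), div_lt_one (by positivity)]
    linarith
  filter_upwards [Filter.eventually_ne_atTop 0,
    eventually_rpow_mul_rpow_mul_pow_le (by positivity) (by positivity) zero_le_one zero_le_one
      degree_uv,
    eventually_rpow_mul_rpow_mul_pow_le (by positivity) (by positivity) zero_le_two
      (sub_nonneg.2 hp1) degree_uuv] with k hk h₁ h₂ ε hε
  obtain ⟨C₁, hC₁, h₁⟩ := h₁ (ε / 2) (half_pos hε)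
  obtain ⟨C₂, hC₂, h₂⟩ := h₂ (ε / 2) (half_pos hε)
  refine ⟨(C₁ + C₂) * ∫ z, χ z ∂μ, mul_nonneg (by positivity) (integral_nonneg hχ.nonneg),
    fun u v h => ?_⟩
  have hψ : Continuous fun z => χ z ^ (k + 2) := (hχ.contDiff.pow _).continuous
  have hψc := hχ.hasCompactSupport_pow (k + 1).succ_ne_zero
  have integrable_u := h.integrable_u_rpow_mul_sq (μ := μ) (θ + 1) hψ hψc
  have integrable_v := h.integrable_v_rpow_mul_sq (μ := μ) (p + 1) hψ hψc
  have integrable_χ : Integrable χ μ :=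
    hχ.contDiff.continuous.integrable_of_hasCompactSupport hχ.hasCompactSupport
  rw [← integral_add integrable_u integrable_v, ← integral_const_mul, ← integral_const_mul,
    ← integral_add ((integrable_u.fun_add integrable_v).const_mul _) (integrable_χ.const_mul _)]
  refine integral_mono (h.integrable_lowerOrder_mul_pow hχ.contDiff.continuous
    hχ.hasCompactSupport (by omega))
    (((integrable_u.fun_add integrable_v).const_mul _).fun_add (integrable_χ.const_mul _))
    fun z => ?_
  have bound_uv := h₁ (u z) (v z) (χ z) (h.u_pos z) (h.v_pos z) (hχ.nonneg z) (hχ.le_one z)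
  have bound_uuv := h₂ (u z) (v z) (χ z) (h.u_pos z) (h.v_pos z) (hχ.nonneg z) (hχ.le_one z)
  rw [rpow_one, rpow_one] at bound_uv
  rw [rpow_two] at bound_uuv
  rw [lowerOrder]
  linarith

end IsLaneEmden

variable [FiniteDimensional ℝ E]

variable (W) in
lemma integral_mul_lap_eq_neg_sum (hf : ContDiff ℝ 1 f) (hg : ContDiff ℝ 2 g)
    (hc : HasCompactSupport f ∨ HasCompactSupport g) :
    ∫ z, f z * W.lap g z ∂μ =
      -∑ i, ∫ z, W.weight i z * dirDeriv (W.dir i) f z * dirDeriv (W.dir i) g z ∂μ := by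
  have integrable_term (i : ι) : Integrable (fun z =>
      W.weight i z * f z * dirDeriv (W.dir i) (dirDeriv (W.dir i) g) z) μ := by
    refine Continuous.integrable_of_hasCompactSupport (((W.continuous_weight i).mul
      hf.continuous).mul (continuous_dirDeriv (contDiff_one_dirDeriv hg _) _)) ?_
    rcases hc with hc | hc
    · exact (hc.mul_left (f := W.weight i)).mul_right
    · exact (hasCompactSupport_dirDeriv (hasCompactSupport_dirDeriv hc _) _).mul_left
  have expand (z : E) : f z * W.lap g z =
      ∑ i, W.weight i z * f z * dirDeriv (W.dir i) (dirDeriv (W.dir i) g) z := by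
    rw [lap, Finset.mul_sum]
    exact Finset.sum_congr rfl fun i _ => by ring
  simp only [expand]
  rw [integral_finsetSum _ fun i _ => integrable_term i, ← Finset.sum_neg_distrib]
  exact Finset.sum_congr rfl fun i _ => integral_mul_dirDeriv_eq_neg hf
    (contDiff_one_dirDeriv hg _) (W.continuous_weight i) (W.weight_add_smul_dir i)
    (hc.imp_right (hasCompactSupport_dirDeriv · _))

variable (W) in
theorem integral_mul_lap_comm (hf : ContDiff ℝ 2 f) (hg : ContDiff ℝ 2 g)
    (hc : HasCompactSupport f ∨ HasCompactSupport g) :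
    ∫ z, f z * W.lap g z ∂μ = ∫ z, g z * W.lap f z ∂μ := by
  rw [W.integral_mul_lap_eq_neg_sum (hf.of_le one_le_two) hg hc,
    W.integral_mul_lap_eq_neg_sum (hg.of_le one_le_two) hf hc.symm]
  simp only [mul_right_comm]

variable (W) in
lemma integral_le_of_add_mul_lap_le {F G : E → ℝ} (hf : ContDiff ℝ 2 f) (hg : ContDiff ℝ 2 g)
    (hc : HasCompactSupport f ∨ HasCompactSupport g) (hF : Integrable F μ) (hG : Integrable G μ)
    (h : ∀ z, F z + f z * W.lap g z ≤ G z + g z * W.lap f z) :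
    ∫ z, F z ∂μ ≤ ∫ z, G z ∂μ := by
  have hfg := W.integrable_mul_lap (μ := μ) hf.continuous hg hc
  have hgf := W.integrable_mul_lap (μ := μ) hg.continuous hf hc.symm
  have key := integral_mono (hF.add hfg) (hG.add hgf) h
  simp only [Pi.add_apply] at key
  rw [integral_add hF hfg, integral_add hG hgf, W.integral_mul_lap_comm hf hg hc] at key
  exact le_of_add_le_add_right key

-- Test the second inequality against `φ² / ξ` and move the operator onto it; completing a square
-- in `ζ φ / ξ` eliminates `ζ`.
variable (W) in
theorem integral_mul_sq_le_of_supersolution {a b ξ ζ φ : E → ℝ} (ha : Continuous a)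
    (ha0 : ∀ z, 0 < a z) (hb : Continuous b) (hξ : ContDiff ℝ 2 ξ) (hζ : ContDiff ℝ 2 ζ)
    (hξ0 : ∀ z, 0 < ξ z) (hζ0 : ∀ z, 0 < ζ z) (hlapξ : ∀ z, a z * ζ z ≤ -W.lap ξ z)
    (hlapζ : ∀ z, b z * ξ z ≤ -W.lap ζ z) (hφ : ContDiff ℝ 2 φ) (hc : HasCompactSupport φ) :
    ∫ z, b z * φ z ^ 2 ∂μ ≤ ∫ z, (a z)⁻¹ * W.lap φ z ^ 2 ∂μ := by
  obtain ⟨r, hr, hrc, rfl⟩ : ∃ r : E → ℝ, ContDiff ℝ 2 r ∧ HasCompactSupport r ∧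
      φ = fun z => r z * ξ z := by
    refine ⟨fun z => φ z * (ξ z)⁻¹, hφ.mul (hξ.inv fun z => (hξ0 z).ne'), hc.mul_right, ?_⟩
    exact funext fun z => (inv_mul_cancel_right₀ (hξ0 z).ne' _).symm
  have hlapφ := W.continuous_lap hφ
  refine W.integral_le_of_add_mul_lap_le (hr.mul hφ) hζ (.inl hrc.mul_right)
    (Continuous.integrable_of_hasCompactSupport (by fun_prop)
      (.intro hc fun z hz => by simp [image_eq_zero_of_notMem_tsupport hz]))
    (Continuous.integrable_of_hasCompactSupport
      ((ha.inv₀ fun z => (ha0 z).ne').mul (hlapφ.pow 2))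
      (.intro hc fun z hz => by simp [W.lap_eq_zero_of_notMem_tsupport hz])) fun z => ?_
  rw [W.lap_mul_mul_self hr hξ]
  set P := W.lap (fun z => r z * ξ z) z
  have testing : b z * (r z * ξ z) ^ 2 + r z * (r z * ξ z) * W.lap ζ z ≤ 0 := by
    nlinarith [mul_le_mul_of_nonneg_left (hlapζ z) (mul_nonneg (sq_nonneg (r z)) (hξ0 z).le)]
  have square : 0 ≤ (a z)⁻¹ * P ^ 2 + 2 * (r z * ζ z) * P + a z * (r z * ζ z) ^ 2 := by
    have ha := ha0 z
    have expand : (a z)⁻¹ * P ^ 2 + 2 * (r z * ζ z) * P + a z * (r z * ζ z) ^ 2 =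
        (a z)⁻¹ * (P + a z * (r z * ζ z)) ^ 2 := by
      field_simp
      ring
    rw [expand]
    positivity
  have ξ_bound : a z * (r z * ζ z) ^ 2 ≤ r z ^ 2 * ζ z * -W.lap ξ z := by
    linarith [mul_le_mul_of_nonneg_left (hlapξ z) (mul_nonneg (sq_nonneg (r z)) (hζ0 z).le)]
  have carre_term := mul_nonneg (mul_nonneg (hζ0 z).le (hξ0 z).le) (W.carre_self_nonneg r z)
  linarith

namespace IsLaneEmden

-- The second equation tested with `u ψ ^ 2`, so that `∫ u ^ (θ + 1) ψ ^ 2` appears.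
lemma integral_v_le (h : W.IsLaneEmden p θ u v) (hψ : ContDiff ℝ 2 ψ) (hc : HasCompactSupport ψ)
    {ε : ℝ} (hε : 0 < ε) :
    ∫ z, v z ^ (p + 1) * ψ z ^ 2 ∂μ ≤
      ∫ z, u z ^ (θ + 1) * ψ z ^ 2 ∂μ + (ε * ∫ z, v z ^ (p + 1) * ψ z ^ 2 ∂μ
        + ε⁻¹ * ∫ z, v z ^ (1 - p) * W.commutator ψ u z ^ 2 ∂μ
        + 2 * ∫ z, u z * v z * W.carre ψ ψ z ∂μ) := by
  have integrable_u := h.integrable_u_rpow_mul_sq (μ := μ) (θ + 1) hψ.continuous hc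
  have integrable_v := h.integrable_v_rpow_mul_sq (μ := μ) (p + 1) hψ.continuous hc
  have integrable_v' := integrable_v.const_mul ε
  have integrable_commutator :=
    (h.integrable_v_rpow_mul_commutator_sq (μ := μ) (1 - p) hψ hc).const_mul ε⁻¹
  have integrable_carre := (h.integrable_mul_mul_carre_self (μ := μ) hψ hc).const_mul 2
  have integrable_young := integrable_v'.fun_add integrable_commutator
  rw [← integral_const_mul, ← integral_const_mul, ← integral_const_mul,
    ← integral_add integrable_v' integrable_commutator,
    ← integral_add integrable_young integrable_carre,
    ← integral_add integrable_u (integrable_young.fun_add integrable_carre)]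
  refine W.integral_le_of_add_mul_lap_le h.contDiff_v ((h.contDiff_u.mul hψ).mul hψ)
    (.inr hc.mul_left) integrable_v
    (integrable_u.fun_add (integrable_young.fun_add integrable_carre)) fun z => ?_
  have young := mul_le_mul_of_nonneg_left (two_mul_le_add_mul_sq (a := ψ z * v z ^ p)
    (b := W.commutator ψ u z) hε) (rpow_pos_of_pos (h.v_pos z) (1 - p)).le
  rw [lap_mul_sq h.contDiff_u hψ, h.lap_u, h.lap_v, rpow_add_one (h.u_pos z).ne',
    rpow_add_one (h.v_pos z).ne']
  linear_combination young + (ε * v z ^ p * ψ z ^ 2 - 2 * ψ z * W.commutator ψ u z)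
    * h.v_rpow_one_sub_mul_rpow z

lemma stabilityInequality_of_supersolution {ξ ζ : E → ℝ} (h : W.IsLaneEmden p θ u v) (hp0 : 0 < p)
    (hξ : ContDiff ℝ 2 ξ) (hζ : ContDiff ℝ 2 ζ) (hξ0 : ∀ z, 0 < ξ z) (hζ0 : ∀ z, 0 < ζ z)
    (hlapξ : ∀ z, p * v z ^ (p - 1) * ζ z ≤ -W.lap ξ z)
    (hlapζ : ∀ z, θ * u z ^ (θ - 1) * ξ z ≤ -W.lap ζ z) :
    W.StabilityInequality μ p θ u v := by
  intro φ hφ hc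
  have key := W.integral_mul_sq_le_of_supersolution (μ := μ)
    (a := fun z => p * v z ^ (p - 1)) (b := fun z => θ * u z ^ (θ - 1))
    ((h.continuous_v_rpow _).const_mul p) (fun z => mul_pos hp0 (rpow_pos_of_pos (h.v_pos z) _))
    ((h.continuous_u_rpow _).const_mul θ) hξ hζ hξ0 hζ0 hlapξ hlapζ hφ hc
  have inv_weight (z : E) : (p * v z ^ (p - 1))⁻¹ = p⁻¹ * v z ^ (1 - p) := by
    rw [mul_inv, ← rpow_neg (h.v_pos z).le, neg_sub]
  simpa only [inv_weight, mul_assoc, integral_const_mul] using key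

section Cutoff

variable {χ : E → ℝ} {D : ℝ}

-- The gradient term of `commutator_sq_le` is produced by applying `W.lap` to `u ^ 2`, and moving
-- the operator onto the weight `v ^ (1 - p) χ ^ (2k + 2)` leaves only zeroth-order terms.
lemma integral_commutator_sq_le (h : W.IsLaneEmden p θ u v) (hp0 : 0 < p) (hp1 : p ≤ 1)
    (hχ : W.IsCutoff χ D) {k : ℕ} (hk : k ≠ 0) :
    ∫ z, v z ^ (1 - p) * W.commutator (fun z => χ z ^ (k + 2)) u z ^ 2 ∂μ ≤
      (8 * ((k + 2) ^ 2 * D) + (18 + 16 * p⁻¹) * ((k + 2) ^ 2 * D) ^ 2)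
        * ∫ z, lowerOrder p u v z * χ z ^ (2 * k) ∂μ := by
  have hM : 0 ≤ (k + 2) ^ 2 * D := mul_nonneg (by positivity) hχ.bound_nonneg
  set M := (k + 2) ^ 2 * D
  rw [← integral_const_mul]
  refine W.integral_le_of_add_mul_lap_le (f := fun z => 4 * M * u z ^ 2)
    (g := fun z => v z ^ (1 - p) * (χ z ^ (k + 1)) ^ 2)
    (contDiff_const.mul (h.contDiff_u.pow 2))
    ((h.contDiff_v.rpow_const_of_ne fun z => (h.v_pos z).ne').mul
      ((hχ.contDiff.pow (k + 1)).pow 2)) (.inr ?_)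
    (h.integrable_v_rpow_mul_commutator_sq _ (hχ.contDiff.pow _)
      (hχ.hasCompactSupport_pow (k + 1).succ_ne_zero))
    ((h.integrable_lowerOrder_mul_pow hχ.contDiff.continuous hχ.hasCompactSupport
      (by omega)).const_mul _) fun z => ?_
  · simp only [← pow_mul]
    exact (hχ.hasCompactSupport_pow (by omega)).mul_left
  have hu := (h.u_pos z).le
  have hv := (h.v_pos z).le
  have hχk := pow_nonneg (hχ.nonneg z) (2 * k)
  have hw := (rpow_pos_of_pos (h.v_pos z) (1 - p)).le
  have hlap := mul_le_mul_of_nonneg_left (hχ.lap_rpow_mul_sq_pow_le hp0 hp1 h.contDiff_v h.v_pos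
    h.lap_v_nonpos k z) (by positivity : 0 ≤ 4 * M * u z ^ 2)
  have hcommutator := mul_le_mul_of_nonneg_left (hχ.commutator_sq_le h.contDiff_u k z) hw
  have huv : M * (u z * v z * χ z ^ (2 * k)) * χ z ^ 2 ≤ M * (u z * v z * χ z ^ (2 * k)) :=
    mul_le_of_le_one_right (by positivity) (pow_le_one₀ (hχ.nonneg z) (hχ.le_one z))
  have huv' : 0 ≤ (18 + 16 * p⁻¹) * M ^ 2 * (u z * v z * χ z ^ (2 * k)) := by positivity
  have hwu : 0 ≤ M * (u z ^ 2 * v z ^ (1 - p) * χ z ^ (2 * k)) := by positivity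
  rw [W.lap_const_mul_sq h.contDiff_u, h.lap_u, lowerOrder]
  linear_combination hcommutator + hlap + 8 * huv + huv' + 8 * hwu
    + 8 * M * u z * χ z ^ (2 * k) * χ z ^ 2 * h.v_rpow_one_sub_mul_rpow z

variable (μ) in
lemma exists_coupled_bounds_lowerOrder (hχ : W.IsCutoff χ D) (hp0 : 0 < p) (hp1 : p ≤ 1) {k : ℕ}
    (hk : k ≠ 0) {δ : ℝ} (hδ : 0 < δ) :
    ∃ c : ℝ, 0 ≤ c ∧ ∀ u v : E → ℝ, W.IsLaneEmden p θ u v → W.StabilityInequality μ p θ u v →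
      let A := ∫ z, u z ^ (θ + 1) * (χ z ^ (k + 2)) ^ 2 ∂μ
      let B := ∫ z, v z ^ (p + 1) * (χ z ^ (k + 2)) ^ 2 ∂μ
      let T := ∫ z, lowerOrder p u v z * χ z ^ (2 * k) ∂μ
      θ * A ≤ p⁻¹ * B + δ * B + c * T ∧ B ≤ A + δ * B + c * T := by
  have hD := hχ.bound_nonneg
  set M := (k + 2) ^ 2 * D
  have : 0 ≤ M := by positivity
  set K := 8 * M + (18 + 16 * p⁻¹) * M ^ 2
  refine ⟨p⁻¹ * (1 + (p * δ)⁻¹) * K + (δ⁻¹ * K + 2 * M), by positivity, fun u v h hst => ?_⟩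
  intro A B T
  have hT : 0 ≤ T := integral_nonneg fun z => by
    have hu := h.u_pos z
    have hv := h.v_pos z
    exact mul_nonneg (by unfold lowerOrder; positivity) (pow_nonneg (hχ.nonneg z) _)
  have hψ := hχ.contDiff.pow (k + 2)
  have hψc := hχ.hasCompactSupport_pow (k + 1).succ_ne_zero
  have commutator_le := h.integral_commutator_sq_le (μ := μ) hp0 hp1 hχ hk
  have carre_le := h.integral_mul_mul_carre_self_le (μ := μ) hχ hk
  constructor
  · calc θ * A ≤ p⁻¹ * ((1 + p * δ) * B + (1 + (p * δ)⁻¹) * _) :=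
          h.integral_u_le_of_stable hp0 hst hψ hψc (mul_pos hp0 hδ)
      _ ≤ p⁻¹ * ((1 + p * δ) * B + (1 + (p * δ)⁻¹) * (K * T)) := by gcongr
      _ = p⁻¹ * B + δ * B + p⁻¹ * (1 + (p * δ)⁻¹) * K * T := by
          field_simp
      _ ≤ _ := add_le_add_right (mul_le_mul_of_nonneg_right
          (le_add_of_nonneg_right (by positivity)) hT) _
  · calc B ≤ A + (δ * B + δ⁻¹ * _ + 2 * _) := h.integral_v_le hψ hψc hδ
      _ ≤ A + (δ * B + δ⁻¹ * (K * T) + 2 * (M * T)) := by gcongr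
      _ = A + δ * B + (δ⁻¹ * K + 2 * M) * T := by ring
      _ ≤ _ := add_le_add_right (mul_le_mul_of_nonneg_right
          (le_add_of_nonneg_left (by positivity)) hT) _

variable (μ) in
lemma eventually_coupled_bounds (hχ : W.IsCutoff χ D) (hp0 : 0 < p) (hp1 : p ≤ 1)
    (hθ : 0 < θ) (hpθ : 1 < p * θ) {δ : ℝ} (hδ : 0 < δ) :
    ∀ᶠ k : ℕ in Filter.atTop, ∃ C : ℝ, 0 ≤ C ∧ ∀ u v : E → ℝ, W.IsLaneEmden p θ u v →
      W.StabilityInequality μ p θ u v →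
      let A := ∫ z, u z ^ (θ + 1) * (χ z ^ (k + 2)) ^ 2 ∂μ
      let B := ∫ z, v z ^ (p + 1) * (χ z ^ (k + 2)) ^ 2 ∂μ
      θ * A ≤ p⁻¹ * B + δ * (A + B) + C ∧ B ≤ A + δ * (A + B) + C := by
  filter_upwards [Filter.eventually_ne_atTop 0,
    eventually_integral_lowerOrder_le μ hχ hp0 hp1 hθ hpθ] with k hk hT
  obtain ⟨c, hc, bounds⟩ := exists_coupled_bounds_lowerOrder μ (θ := θ) hχ hp0 hp1 hk (half_pos hδ)
  obtain ⟨C, hC, lowerOrder_le⟩ := hT (δ / 2 / (c + 1)) (by positivity)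
  refine ⟨c * C, by positivity, fun u v h hst => ?_⟩
  intro A B
  have hA : 0 ≤ A := integral_nonneg fun z =>
    mul_nonneg (rpow_pos_of_pos (h.u_pos z) _).le (sq_nonneg _)
  have hB : 0 ≤ B := integral_nonneg fun z =>
    mul_nonneg (rpow_pos_of_pos (h.v_pos z) _).le (sq_nonneg _)
  have absorbed : c * ∫ z, lowerOrder p u v z * χ z ^ (2 * k) ∂μ ≤ δ / 2 * (A + B) + c * C := by
    calc c * ∫ z, lowerOrder p u v z * χ z ^ (2 * k) ∂μ
        ≤ c * (δ / 2 / (c + 1) * (A + B) + C) := mul_le_mul_of_nonneg_left (lowerOrder_le u v h) hc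
      _ = c / (c + 1) * (δ / 2 * (A + B)) + c * C := by ring
      _ ≤ δ / 2 * (A + B) + c * C := by
          refine add_le_add_left (mul_le_of_le_one_left (by positivity) ?_) _
          exact (div_le_one (by positivity)).2 (by linarith)
  obtain ⟨boundA, boundB⟩ := bounds u v h hst
  have hδA : 0 ≤ δ / 2 * A := by positivity
  constructor <;> linarith

variable (μ) in
theorem exists_integral_u_rpow_le (hχ : W.IsCutoff χ D) (hp0 : 0 < p) (hp1 : p ≤ 1)
    (hθ : p⁻¹ < θ) :
    ∃ n : ℕ, n ≠ 0 ∧ ∃ C : ℝ, ∀ u v : E → ℝ, W.IsLaneEmden p θ u v →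
      W.StabilityInequality μ p θ u v → ∫ z, u z ^ (θ + 1) * (χ z ^ n) ^ 2 ∂μ ≤ C := by
  obtain ⟨δ, hδ, absorb⟩ := exists_le_of_coupled_bounds (inv_nonneg.2 hp0.le) hθ
  obtain ⟨k, C, hC, bounds⟩ := (eventually_coupled_bounds μ hχ hp0 hp1
    ((inv_pos.2 hp0).trans hθ) ((inv_lt_iff_one_lt_mul₀' hp0).1 hθ) hδ).exists
  obtain ⟨C', hC'⟩ := absorb C hC
  refine ⟨k + 2, by omega, C', fun u v h hst => hC' _ _ (integral_nonneg fun z => ?_)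
    (bounds u v h hst).1 (bounds u v h hst).2⟩
  exact mul_nonneg (rpow_pos_of_pos (h.u_pos z) _).le (sq_nonneg _)

end Cutoff

end IsLaneEmden

end WeightedFrame

section Grushin

variable {s : ℝ}

lemma pX_eq_dirDeriv {f : Pt N₁ N₂ → ℝ} (hf : Differentiable ℝ f) (i : Fin N₁) :
    pX i f = dirDeriv (Pi.single i 1, 0) f := by
  funext z
  have hline : HasDerivAt (fun t => (Function.update z.1 i t, z.2)) (Pi.single i 1, 0) (z.1 i) :=
    (hasDerivAt_update z.1 i (z.1 i)).prodMk (hasDerivAt_const _ _)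
  have hz : HasFDerivAt f (fderiv ℝ f z) (Function.update z.1 i (z.1 i), z.2) := by
    simpa using (hf z).hasFDerivAt
  exact (hz.comp_hasDerivAt (z.1 i) hline).deriv

lemma pY_eq_dirDeriv {f : Pt N₁ N₂ → ℝ} (hf : Differentiable ℝ f) (j : Fin N₂) :
    pY j f = dirDeriv (0, Pi.single j 1) f := by
  funext z
  have hline : HasDerivAt (fun t => (z.1, Function.update z.2 j t)) (0, Pi.single j 1) (z.2 j) :=
    (hasDerivAt_const _ _).prodMk (hasDerivAt_update z.2 j (z.2 j))
  have hz : HasFDerivAt f (fderiv ℝ f z) (z.1, Function.update z.2 j (z.2 j)) := by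
    simpa using (hf z).hasFDerivAt
  exact (hz.comp_hasDerivAt (z.2 j) hline).deriv

lemma enorm'_nonneg {n : ℕ} (x : Fin n → ℝ) : 0 ≤ enorm' x :=
  Real.sqrt_nonneg _

lemma enorm'_smul {n : ℕ} {R : ℝ} (hR : 0 ≤ R) (x : Fin n → ℝ) :
    enorm' (R • x) = R * enorm' x := by
  simp only [enorm', Pi.smul_apply, smul_eq_mul, mul_pow, ← Finset.mul_sum]
  rw [Real.sqrt_mul (sq_nonneg R), Real.sqrt_sq hR]

lemma continuous_enorm' {n : ℕ} : Continuous (enorm' (n := n)) := by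
  unfold enorm'
  fun_prop

/-- The coordinate directions of `ℝ^N₁ × ℝ^N₂` with the weight `1` on the `x`-directions and
`|x| ^ (2 * s)` on the `y`-directions, whose weighted Laplacian is the Grushin operator. -/
def grushinFrame (hs : 0 ≤ s) : WeightedFrame (Fin N₁ ⊕ Fin N₂) (Pt N₁ N₂) where
  dir := Sum.elim (fun i => (Pi.single i 1, 0)) (fun j => (0, Pi.single j 1))
  weight := Sum.elim (fun _ _ => 1) (fun _ z => enorm' z.1 ^ (2 * s))
  weight_nonneg := by
    rintro (_ | _) z
    · exact zero_le_one
    · exact Real.rpow_nonneg (enorm'_nonneg _) _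
  continuous_weight := by
    rintro (_ | _)
    · exact continuous_const
    · exact (continuous_enorm'.comp continuous_fst).rpow_const
        fun _ => Or.inr (mul_nonneg zero_le_two hs)
  weight_add_smul_dir := by
    rintro (_ | _) z t <;> simp

lemma lap_grushinFrame (hs : 0 ≤ s) {f : Pt N₁ N₂ → ℝ} (hf : ContDiff ℝ 2 f) (z : Pt N₁ N₂) :
    (grushinFrame hs).lap f z = grushinLap s f z := by
  have df := hf.differentiable two_ne_zero
  have ddf := fun e => (contDiff_one_dirDeriv hf e).differentiable one_ne_zero
  simp only [WeightedFrame.lap, grushinFrame, Fintype.sum_sum_type, Sum.elim_inl, Sum.elim_inr,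
    one_mul, grushinLap, lapX, lapY, pX_eq_dirDeriv df, pX_eq_dirDeriv (ddf _),
    pY_eq_dirDeriv df, pY_eq_dirDeriv (ddf _), Finset.mul_sum]

lemma IsLaneEmdenSol.isLaneEmden {p θ : ℝ} {u v : Pt N₁ N₂ → ℝ} (h : IsLaneEmdenSol s p θ u v)
    (hs : 0 ≤ s) : (grushinFrame hs).IsLaneEmden p θ u v := by
  obtain ⟨hu, hv, hu0, hv0, hlapu, hlapv⟩ := h
  have hu2 : ContDiff ℝ 2 u := contDiff_infty.mp hu 2
  have hv2 : ContDiff ℝ 2 v := contDiff_infty.mp hv 2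
  exact ⟨hu2, hv2, hu0, hv0, fun z => by rw [lap_grushinFrame hs hu2, ← hlapu, neg_neg],
    fun z => by rw [lap_grushinFrame hs hv2, ← hlapv, neg_neg]⟩

lemma IsStable.stabilityInequality {p θ : ℝ} {u v : Pt N₁ N₂ → ℝ} (hst : IsStable s p θ u v)
    (h : IsLaneEmdenSol s p θ u v) (hs : 0 ≤ s) (hp0 : 0 < p) :
    (grushinFrame hs).StabilityInequality volume p θ u v := by
  obtain ⟨η, ξ, ζ, hη, hξ, hζ, hξ0, hζ0, hlapξ, hlapζ⟩ := hst
  have hξ2 : ContDiff ℝ 2 ξ := contDiff_infty.mp hξ 2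
  have hζ2 : ContDiff ℝ 2 ζ := contDiff_infty.mp hζ 2
  have : (volume : Measure (Pt N₁ N₂)).IsAddHaarMeasure := Measure.prod.instIsAddHaarMeasure _ _
  refine (h.isLaneEmden hs).stabilityInequality_of_supersolution hp0 hξ2 hζ2 hξ0 hζ0
    (fun z => ?_) fun z => ?_
  · rw [lap_grushinFrame hs hξ2, hlapξ]
    exact le_add_of_nonneg_right (mul_nonneg hη (hξ0 z).le)
  · rw [lap_grushinFrame hs hζ2, hlapζ]
    exact le_add_of_nonneg_right (mul_nonneg hη (hζ0 z).le)

end Grushin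

section Dilation

variable {s R a : ℝ} {w : Pt N₁ N₂ → ℝ}

/-- The anisotropic dilation `(x, y) ↦ (R x, R ^ (1 + s) y)`, for which the Grushin operator is
homogeneous of degree two. -/
def grushinDilation (s R : ℝ) : Pt N₁ N₂ →ₗ[ℝ] Pt N₁ N₂ :=
  (R • LinearMap.id).prodMap (R ^ (1 + s) • LinearMap.id)

lemma grushinDilation_apply (z : Pt N₁ N₂) :
    grushinDilation s R z = (R • z.1, R ^ (1 + s) • z.2) :=
  rfl

lemma continuous_grushinDilation :
    Continuous (grushinDilation s R : Pt N₁ N₂ →ₗ[ℝ] Pt N₁ N₂) :=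
  LinearMap.continuous_of_finiteDimensional _

lemma det_grushinDilation (hR : 0 < R) :
    LinearMap.det (grushinDilation s R : Pt N₁ N₂ →ₗ[ℝ] Pt N₁ N₂) =
      R ^ ((N₁ : ℝ) + (1 + s) * N₂) := by
  rw [grushinDilation, LinearMap.det_prodMap, LinearMap.det_smul, LinearMap.det_smul,
    LinearMap.det_id, LinearMap.det_id, mul_one, mul_one, Module.finrank_fin_fun,
    Module.finrank_fin_fun, Real.rpow_add hR (N₁ : ℝ), Real.rpow_mul hR.le, Real.rpow_natCast,
    Real.rpow_natCast]

lemma measureReal_preimage_grushinDilation (hR : 0 < R) (S : Set (Pt N₁ N₂)) :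
    volume.real (grushinDilation s R ⁻¹' S) =
      R ^ (-((N₁ : ℝ) + (1 + s) * N₂)) * volume.real S := by
  have : (volume : Measure (Pt N₁ N₂)).IsAddHaarMeasure := Measure.prod.instIsAddHaarMeasure _ _
  have hdet := Real.rpow_pos_of_pos hR ((N₁ : ℝ) + (1 + s) * N₂)
  rw [← det_grushinDilation hR] at hdet
  rw [measureReal_def, Measure.addHaar_preimage_linearMap _ hdet.ne', ENNReal.toReal_mul,
    abs_of_pos (inv_pos.2 hdet), ENNReal.toReal_ofReal (inv_pos.2 hdet).le,
    det_grushinDilation hR, Real.rpow_neg hR.le, measureReal_def]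

lemma norm_le_norm_grushinDilation (hs : 0 ≤ s) (hR : 1 ≤ R) (z : Pt N₁ N₂) :
    ‖z‖ ≤ ‖grushinDilation s R z‖ := by
  have hRs : 1 ≤ R ^ (1 + s) := Real.one_le_rpow hR (by linarith)
  rw [grushinDilation_apply, Prod.norm_def, Prod.norm_def, norm_smul, norm_smul]
  exact max_le_max (le_mul_of_one_le_left (norm_nonneg _) (hR.trans (le_abs_self _)))
    (le_mul_of_one_le_left (norm_nonneg _) (hRs.trans (le_abs_self _)))

/-- The rescaling `z ↦ R ^ a * w (δ z)` of a function by the anisotropic dilation `δ`; with `a`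
the exponents `α` and `β` of the system it preserves solutions. -/
def grushinRescale (s R a : ℝ) (w : Pt N₁ N₂ → ℝ) (z : Pt N₁ N₂) : ℝ :=
  R ^ a * w (grushinDilation s R z)

lemma grushinRescale_pos (hR : 0 < R) (hw : ∀ z, 0 < w z) (z : Pt N₁ N₂) :
    0 < grushinRescale s R a w z :=
  mul_pos (Real.rpow_pos_of_pos hR a) (hw _)

lemma grushinRescale_rpow (hR : 0 < R) (hw : ∀ z, 0 < w z) (q : ℝ) (z : Pt N₁ N₂) :
    grushinRescale s R a w z ^ q = R ^ (a * q) * w (grushinDilation s R z) ^ q := by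
  rw [grushinRescale, Real.mul_rpow (Real.rpow_pos_of_pos hR a).le (hw _).le,
    ← Real.rpow_mul hR.le]

lemma contDiff_grushinRescale {n : WithTop ℕ∞} (hw : ContDiff ℝ n w) :
    ContDiff ℝ n (grushinRescale s R a w) :=
  contDiff_const.mul (hw.comp (LinearMap.toContinuousLinearMap (grushinDilation s R)).contDiff)

lemma pX_const_mul_comp_grushinDilation (c : ℝ) (i : Fin N₁) :
    pX i (fun z => c * w (grushinDilation s R z)) =
      fun z => c * R * pX i w (grushinDilation s R z) := by
  funext z
  have hchain := deriv_comp_mul_left R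
    (fun t => w (Function.update (R • z.1) i t, R ^ (1 + s) • z.2)) (z.1 i)
  simp only [pX, grushinDilation_apply, ← Function.update_smul]
  simpa [mul_assoc] using congrArg (c * ·) hchain

lemma pY_const_mul_comp_grushinDilation (c : ℝ) (j : Fin N₂) :
    pY j (fun z => c * w (grushinDilation s R z)) =
      fun z => c * R ^ (1 + s) * pY j w (grushinDilation s R z) := by
  funext z
  have hchain := deriv_comp_mul_left (R ^ (1 + s))
    (fun t => w (R • z.1, Function.update (R ^ (1 + s) • z.2) j t)) (z.2 j)
  simp only [pY, grushinDilation_apply, ← Function.update_smul]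
  simpa [mul_assoc] using congrArg (c * ·) hchain

lemma grushinLap_grushinRescale (hR : 0 < R) (w : Pt N₁ N₂ → ℝ) (z : Pt N₁ N₂) :
    grushinLap s (grushinRescale s R a w) z =
      R ^ (a + 2) * grushinLap s w (grushinDilation s R z) := by
  have hfst : enorm' (grushinDilation s R z).1 = R * enorm' z.1 := enorm'_smul hR.le z.1
  have hRs : R ^ (1 + s) * R ^ (1 + s) = R ^ 2 * R ^ (2 * s) := by
    rw [← Real.rpow_add hR, ← Real.rpow_natCast, ← Real.rpow_add hR]
    ring_nf
  unfold grushinLap lapX lapY grushinRescale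
  simp only [pX_const_mul_comp_grushinDilation, pY_const_mul_comp_grushinDilation,
    ← Finset.mul_sum]
  rw [hfst, Real.mul_rpow hR.le (enorm'_nonneg _), Real.rpow_add hR a, Real.rpow_two,
    mul_assoc (R ^ a) (R ^ (1 + s)), hRs]
  ring

variable {p θ α β : ℝ} {u v : Pt N₁ N₂ → ℝ}

lemma IsLaneEmdenSol.rescale (h : IsLaneEmdenSol s p θ u v) (hR : 0 < R)
    (hα : α + 2 = β * p) (hβ : β + 2 = α * θ) :
    IsLaneEmdenSol s p θ (grushinRescale s R α u) (grushinRescale s R β v) := by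
  obtain ⟨hu, hv, hu0, hv0, hlapu, hlapv⟩ := h
  refine ⟨contDiff_grushinRescale hu, contDiff_grushinRescale hv, grushinRescale_pos hR hu0,
    grushinRescale_pos hR hv0, fun z => ?_, fun z => ?_⟩
  · rw [grushinLap_grushinRescale hR, grushinRescale_rpow hR hv0, ← hlapu, hα]
    ring
  · rw [grushinLap_grushinRescale hR, grushinRescale_rpow hR hu0, ← hlapv, hβ]
    ring

lemma IsStable.rescale (hst : IsStable s p θ u v) (h : IsLaneEmdenSol s p θ u v)
    (hR : 0 < R) (hα : α + 2 = β * p) (hβ : β + 2 = α * θ) :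
    IsStable s p θ (grushinRescale s R α u) (grushinRescale s R β v) := by
  obtain ⟨-, -, hu0, hv0, -, -⟩ := h
  obtain ⟨η, ξ, ζ, hη, hξ, hζ, hξ0, hζ0, hlapξ, hlapζ⟩ := hst
  have hRα : R ^ (α + 2) = R ^ (β * (p - 1)) * R ^ β := by
    rw [← Real.rpow_add hR, hα]
    ring_nf
  have hRβ : R ^ (β + 2) = R ^ (α * (θ - 1)) * R ^ α := by
    rw [← Real.rpow_add hR, hβ]
    ring_nf
  refine ⟨R ^ 2 * η, grushinRescale s R α ξ, grushinRescale s R β ζ, by positivity,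
    contDiff_grushinRescale hξ, contDiff_grushinRescale hζ, grushinRescale_pos hR hξ0,
    grushinRescale_pos hR hζ0, fun z => ?_, fun z => ?_⟩
  · rw [grushinLap_grushinRescale hR, ← mul_neg, hlapξ, grushinRescale_rpow hR hv0, mul_add]
    nth_rw 1 [hRα]
    rw [Real.rpow_add hR, Real.rpow_two, grushinRescale, grushinRescale]
    ring
  · rw [grushinLap_grushinRescale hR, ← mul_neg, hlapζ, grushinRescale_rpow hR hu0, mul_add]
    nth_rw 1 [hRβ]
    rw [Real.rpow_add hR, Real.rpow_two, grushinRescale, grushinRescale]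
    ring

lemma exists_pos_mul_rpow_le_integral_grushinRescale (hs : 0 ≤ s) (hw : Continuous w)
    (hw0 : ∀ z, 0 < w z) (a : ℝ) {q : ℝ} (hq : 0 ≤ q) {φ : Pt N₁ N₂ → ℝ} (hφ : Continuous φ)
    (hφc : HasCompactSupport φ) (hφ0 : ∀ z, 0 ≤ φ z)
    (hφ1 : ∀ z ∈ Metric.closedBall 0 1, φ z = 1) :
    ∃ m > 0, ∀ R ≥ 1, m * R ^ (a * q - ((N₁ : ℝ) + (1 + s) * N₂)) ≤
      ∫ z, grushinRescale s R a w z ^ q * φ z := by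
  obtain ⟨z₀, -, hz₀⟩ := (isCompact_closedBall (0 : Pt N₁ N₂) 1).exists_isMinOn
    (Metric.nonempty_closedBall.2 zero_le_one) hw.continuousOn
  have hball : 0 < volume.real (Metric.closedBall (0 : Pt N₁ N₂) 1) :=
    ENNReal.toReal_pos (Metric.measure_closedBall_pos _ _ one_pos).ne'
      (isCompact_closedBall _ _).measure_ne_top
  refine ⟨w z₀ ^ q * volume.real (Metric.closedBall (0 : Pt N₁ N₂) 1),
    mul_pos (Real.rpow_pos_of_pos (hw0 z₀) q) hball, fun R hR1 => ?_⟩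
  have hR : 0 < R := one_pos.trans_le hR1
  set S : Set (Pt N₁ N₂) := grushinDilation s R ⁻¹' Metric.closedBall 0 1
  have hSsub : S ⊆ Metric.closedBall 0 1 := fun z hz => by
    simp only [S, Set.mem_preimage, mem_closedBall_zero_iff] at hz ⊢
    exact (norm_le_norm_grushinDilation hs hR1 z).trans hz
  have hSm : MeasurableSet S :=
    (Metric.isClosed_closedBall.preimage continuous_grushinDilation).measurableSet
  have hlower : ∀ z ∈ S, R ^ (a * q) * w z₀ ^ q ≤ grushinRescale s R a w z ^ q * φ z := by
    intro z hz
    rw [hφ1 z (hSsub hz), mul_one, grushinRescale_rpow hR hw0]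
    gcongr
    · exact (hw0 z₀).le
    · exact hz₀ hz
  have hint : Integrable fun z => grushinRescale s R a w z ^ q * φ z := by
    refine Continuous.integrable_of_hasCompactSupport ?_ hφc.mul_left
    exact ((continuous_const.mul (hw.comp continuous_grushinDilation)).rpow_const
      fun _ => Or.inr hq).mul hφ
  calc _ = R ^ (a * q) * w z₀ ^ q * volume.real S := by
        rw [measureReal_preimage_grushinDilation hR, sub_eq_add_neg, Real.rpow_add hR]
        ring
    _ ≤ ∫ z in S, grushinRescale s R a w z ^ q * φ z :=
        setIntegral_ge_of_const_le_real hSm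
          ((measure_mono hSsub).trans_lt (isCompact_closedBall _ _).measure_lt_top).ne hlower
          hint.integrableOn
    _ ≤ _ := setIntegral_le_integral hint (.of_forall fun z =>
        mul_nonneg (Real.rpow_nonneg (grushinRescale_pos hR hw0 z).le q) (hφ0 z))

end Dilation

-- Rescaling leaves the a priori bound unchanged but multiplies the energy near the origin by a
-- positive power of `R`, since `α * (θ + 1) = 2 + α + β` exceeds the homogeneous dimension.
theorem IsLaneEmdenSol.not_isStable {s p θ α β : ℝ} {u v : Pt N₁ N₂ → ℝ}
    (h : IsLaneEmdenSol s p θ u v) (hs : 0 ≤ s) (hp0 : 0 < p) (hp1 : p ≤ 1) (hθ : p⁻¹ < θ)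
    (hα : α + 2 = β * p) (hβ : β + 2 = α * θ) (hdim : (N₁ : ℝ) + (1 + s) * N₂ < 2 + α + β) :
    ¬ IsStable s p θ u v := by
  intro hst
  have : (volume : Measure (Pt N₁ N₂)).IsAddHaarMeasure := Measure.prod.instIsAddHaarMeasure _ _
  have hθ0 : 0 < θ := (inv_pos.2 hp0).trans hθ
  let b : ContDiffBump (0 : Pt N₁ N₂) := ⟨1, 2, one_pos, one_lt_two⟩
  obtain ⟨D, hχ⟩ := (grushinFrame hs).exists_isCutoff b.contDiff b.hasCompactSupport
    (fun _ => b.nonneg) fun _ => b.le_one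
  obtain ⟨n, hn, C, apriori⟩ :=
    WeightedFrame.IsLaneEmden.exists_integral_u_rpow_le volume hχ hp0 hp1 hθ
  obtain ⟨m, hm, lower⟩ := exists_pos_mul_rpow_le_integral_grushinRescale hs h.1.continuous
    h.2.2.1 α (add_pos hθ0 one_pos).le ((b.continuous.pow n).pow 2)
    (by simp only [← pow_mul]; exact hχ.hasCompactSupport_pow (by omega))
    (fun z => sq_nonneg (b z ^ n)) fun z hz => by simp [b.one_of_mem_closedBall hz]
  have hE : 0 < α * (θ + 1) - ((N₁ : ℝ) + (1 + s) * N₂) := by linarith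
  obtain ⟨R, hRC, hR1⟩ := ((((tendsto_rpow_atTop hE).const_mul_atTop hm).eventually_gt_atTop
    C).and (Filter.eventually_ge_atTop 1)).exists
  have hR : 0 < R := one_pos.trans_le hR1
  have hsol := h.rescale hR hα hβ
  have hstable := hst.rescale h hR hα hβ
  exact hRC.not_ge ((lower R hR1).trans
    (apriori _ _ (hsol.isLaneEmden hs) (hstable.stabilityInequality hsol hs hp0)))

theorem no_stable_solution_small_p_general (N₁ N₂ : ℕ) (s p θ : ℝ) (hs : 0 ≤ s)
    (hp0 : 0 < p) (hp1 : p ≤ 1) (hθ : 1 / p < θ)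
    (hdim : (N₁ : ℝ) + (1 + s) * N₂ <
      2 + 2 * (p + 1) / (p * θ - 1) + 2 * (θ + 1) / (p * θ - 1)) :
    ¬ ∃ u v : Pt N₁ N₂ → ℝ, IsLaneEmdenSol s p θ u v ∧ IsStable s p θ u v := by
  rintro ⟨u, v, h, hst⟩
  have hpθ : p * θ - 1 ≠ 0 := (sub_pos.2 ((div_lt_iff₀' hp0).1 hθ)).ne'
  refine h.not_isStable hs hp0 hp1 (one_div p ▸ hθ) ?_ ?_ hdim hst
  · rw [div_add' _ _ _ hpθ, div_mul_eq_mul_div]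
    ring
  · rw [div_add' _ _ _ hpθ, div_mul_eq_mul_div]
    ring

/-- for `θ > 1/p > 1 > p > 0` (so `pθ > 1`), if `N_s < 2 + α + β` then the
Grushin Lane–Emden system has no smooth stable solution. -/
theorem no_stable_solution_small_p (N₁ N₂ : ℕ) (hN₁ : 1 ≤ N₁) (hN₂ : 1 ≤ N₂)
    (s p θ : ℝ) (hs : 0 ≤ s) (hp0 : 0 < p) (hp1 : p < 1) (hθ : 1 / p < θ)
    (hdim : (N₁ : ℝ) + (1 + s) * N₂ <
      2 + 2 * (p + 1) / (p * θ - 1) + 2 * (θ + 1) / (p * θ - 1)) :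
    ¬ ∃ u v : Pt N₁ N₂ → ℝ, IsLaneEmdenSol s p θ u v ∧ IsStable s p θ u v :=
  no_stable_solution_small_p_general N₁ N₂ s p θ hs hp0 hp1.le hθ hdim

end
end

section
/- Let p, θ > 0 with θ ≠ −1, and define L(z) = z⁴ − (16pθ(p+1)/(θ+1)) z² + (16pθ(p+1)(p+θ+2)/(θ+1)²) z − 16pθ(p+1)²/(θ+1)². Then L(p+1) = ((p+1)/(θ+1))² [ (p+1)²(θ+1)² − 16p²θ² ]. Consequently, if θ > p ≥ 1 then L(p+1) < 0. -/
open MeasureTheory Real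

noncomputable section

variable {N₁ N₂ : ℕ}

section Field

variable {K : Type*} [Field K] {p θ : K}

/-- The quartic `L(z)` with exponents `p` and `θ`: the stability polynomial of the Lane–Emden
system after the substitution `x = (β/2) z`. At `θ = -1`, division by zero leaves only `z ^ 4`. -/
def laneEmdenQuartic (p θ z : K) : K :=
  z ^ 4 - (16 * p * θ * (p + 1) / (θ + 1)) * z ^ 2
    + (16 * p * θ * (p + 1) * (p + θ + 2) / (θ + 1) ^ 2) * z
    - 16 * p * θ * (p + 1) ^ 2 / (θ + 1) ^ 2

theorem laneEmdenQuartic_eq_pow_four_sub (hθ : θ ≠ -1) (z : K) :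
    laneEmdenQuartic p θ z =
      z ^ 4 - 16 * p * θ * (p + 1) / (θ + 1) ^ 2 * ((z - 1) * ((θ + 1) * z - (p + 1))) := by
  have hθ₁ : θ + 1 ≠ 0 := mt eq_neg_of_add_eq_zero_left hθ
  unfold laneEmdenQuartic
  field_simp
  ring

theorem laneEmdenQuartic_add_one (hθ : θ ≠ -1) :
    laneEmdenQuartic p θ (p + 1) =
      ((p + 1) / (θ + 1)) ^ 2 * ((p + 1) ^ 2 * (θ + 1) ^ 2 - 16 * p ^ 2 * θ ^ 2) := by
  have hθ₁ : θ + 1 ≠ 0 := mt eq_neg_of_add_eq_zero_left hθ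
  have quadratic_value : (p + 1 - 1) * ((θ + 1) * (p + 1) - (p + 1)) = p * θ * (p + 1) := by ring
  rw [laneEmdenQuartic_eq_pow_four_sub hθ, quadratic_value]
  field_simp

end Field

theorem add_one_mul_add_one_lt_four_mul {R : Type*} [CommRing R] [LinearOrder R]
    [IsStrictOrderedRing R] {a b : R} (ha : 1 ≤ a) (hb : 1 < b) :
    (a + 1) * (b + 1) < 4 * a * b :=
  calc
    (a + 1) * (b + 1) < (2 * a) * (2 * b) :=
      mul_lt_mul' (by linarith) (by linarith) (by linarith) (by linarith)
    _ = 4 * a * b := by ring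

section LinearOrderedField

variable {K : Type*} [Field K] [LinearOrder K] [IsStrictOrderedRing K] {p θ : K}

theorem laneEmdenQuartic_add_one_neg (hp : 1 ≤ p) (hθ : 1 < θ) :
    laneEmdenQuartic p θ (p + 1) < 0 := by
  have p_add_one_pos : 0 < p + 1 := by linarith
  have θ_add_one_pos : 0 < θ + 1 := by linarith
  have sq_lt : (p + 1) ^ 2 * (θ + 1) ^ 2 < 16 * p ^ 2 * θ ^ 2 :=
    calc
      (p + 1) ^ 2 * (θ + 1) ^ 2 = ((p + 1) * (θ + 1)) ^ 2 := (mul_pow _ _ 2).symm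
      _ < (4 * p * θ) ^ 2 :=
        pow_lt_pow_left₀ (add_one_mul_add_one_lt_four_mul hp hθ)
          (mul_pos p_add_one_pos θ_add_one_pos).le two_ne_zero
      _ = 16 * p ^ 2 * θ ^ 2 := by ring
  rw [laneEmdenQuartic_add_one (by linarith)]
  exact mul_neg_of_pos_of_neg (pow_pos (div_pos p_add_one_pos θ_add_one_pos) 2)
    (sub_neg.mpr sq_lt)

theorem quartic_value_at_general (hθ : θ ≠ -1) :
    laneEmdenQuartic p θ (p + 1) =
        ((p + 1) / (θ + 1)) ^ 2 * ((p + 1) ^ 2 * (θ + 1) ^ 2 - 16 * p ^ 2 * θ ^ 2) ∧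
      (1 ≤ p → 1 < θ → laneEmdenQuartic p θ (p + 1) < 0) :=
  ⟨laneEmdenQuartic_add_one hθ, laneEmdenQuartic_add_one_neg⟩

end LinearOrderedField

/-- value of the quartic `L` at `z = p+1`:
`L(p+1) = ((p+1)/(θ+1))² [(p+1)²(θ+1)² - 16p²θ²]`; consequently `L(p+1) < 0` when
`θ > p ≥ 1`. -/
theorem quartic_value_at (p θ : ℝ) (hp : 0 < p) (hθ : 0 < θ) (hθ' : θ ≠ -1) :
    ((p + 1) ^ 4 - (16 * p * θ * (p + 1) / (θ + 1)) * (p + 1) ^ 2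
        + (16 * p * θ * (p + 1) * (p + θ + 2) / (θ + 1) ^ 2) * (p + 1)
        - 16 * p * θ * (p + 1) ^ 2 / (θ + 1) ^ 2
      = ((p + 1) / (θ + 1)) ^ 2 * ((p + 1) ^ 2 * (θ + 1) ^ 2 - 16 * p ^ 2 * θ ^ 2))
    ∧ (1 ≤ p → p < θ →
      (p + 1) ^ 4 - (16 * p * θ * (p + 1) / (θ + 1)) * (p + 1) ^ 2
        + (16 * p * θ * (p + 1) * (p + θ + 2) / (θ + 1) ^ 2) * (p + 1)
        - 16 * p * θ * (p + 1) ^ 2 / (θ + 1) ^ 2 < 0) := by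
  obtain ⟨value, neg⟩ := quartic_value_at_general (p := p) hθ'
  exact ⟨value, fun h1p hpθ => neg h1p (h1p.trans_lt hpθ)⟩

end
end
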